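/- arXiv:2410.10529 — 3 statements merged into one kernel-verified Lean document; each statement's English description precedes it below -/
import Mathlib

section
/- Let Ω ⊆ ℝ³ be an open, simply connected set and let v : ℝ³ → ℝ³ be a continuously differentiable vector field on Ω that is irrotational on Ω, i.e. for every x ∈ Ω its Fréchet derivative Dv(x) is symmetric with respect to the Euclidean inner product: (Dv(x) u) · w = (Dv(x) w) · u for all u, w ∈ ℝ³. Then v admits a scalar potential on Ω: there exists Φ : ℝ³ → ℝ such that for every x ∈ Ω, Φ is differentiable at x and ∇Φ(x) = v(x). -/
open scoped RealInnerProductSpace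

/-- A copy of the reals with the discrete topology. -/
def DiscReal : Type := ℝ

instance instTopDiscReal : TopologicalSpace DiscReal := ⊥

instance instDiscDiscReal : DiscreteTopology DiscReal := ⟨rfl⟩

theorem contAt_disc {X : Type*} [TopologicalSpace X] {h : X → DiscReal} {x : X} :
    ContinuousAt h x ↔ ∀ᶠ y in nhds x, h y = h x := by
  rw [ContinuousAt, nhds_discrete DiscReal, Filter.tendsto_pure]

/-- The bundle of local primitives. -/
noncomputable def primCore {B : Type*} [TopologicalSpace B] (U : B → Set B)
    (hU : ∀ i, IsOpen (U i)) (hm : ∀ i, i ∈ U i) (f : B → B → ℝ)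
    (hf : ∀ i j, ∀ x ∈ U i ∩ U j, ∀ᶠ y in nhds x, f i y - f j y = f i x - f j x) :
    FiberBundleCore B B DiscReal where
  baseSet := U
  isOpen_baseSet := hU
  indexAt := id
  mem_baseSet_at := hm
  coordChange i j x a := ((show ℝ from a) + (f i x - f j x) : ℝ)
  coordChange_self i x _ a := by
    show ((show ℝ from a) + (f i x - f i x) : ℝ) = a
    rw [sub_self, add_zero]
  continuousOn_coordChange i j := by
    rintro ⟨x, a⟩ hx
    apply ContinuousAt.continuousWithinAt
    refine contAt_disc.mpr ?_
    have h2 : ∀ᶠ p : B × DiscReal in nhds (x, a), p.2 = a :=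
      (continuous_snd.tendsto (x, a)).eventually (p := fun q => q = a) (by simp [nhds_discrete])
    have h1 : ∀ᶠ p : B × DiscReal in nhds (x, a), f i p.1 - f j p.1 = f i x - f j x :=
      (continuous_fst.tendsto (x, a)).eventually (hf i j x hx.1)
    filter_upwards [h1, h2] with p hp1 hp2
    simp only [hp1, hp2]
    rfl
  coordChange_comp i j k x _ a := by
    show (((show ℝ from a) + (f i x - f j x)) + (f j x - f k x) : ℝ) =
      (show ℝ from a) + (f i x - f k x)
    ring

theorem glue_local {B : Type*} [TopologicalSpace B] [SimplyConnectedSpace B]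
    [LocallyPathConnectedSpace B] (U : B → Set B)
    (hU : ∀ i, IsOpen (U i)) (hm : ∀ i, i ∈ U i) (f : B → B → ℝ)
    (hf : ∀ i j, ∀ x ∈ U i ∩ U j, ∀ᶠ y in nhds x, f i y - f j y = f i x - f j x) :
    ∃ Φ : B → ℝ, ∀ i, ∀ x ∈ U i, ∀ᶠ y in nhds x, Φ y - f i y = Φ x - f i x := by
  let Z := primCore U hU hm f hf
  have hcov : IsCoveringMap Z.proj :=
    IsFiberBundle.isCoveringMap (F := DiscReal) fun x => ⟨Z.localTriv x, hm x⟩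
  obtain ⟨b⟩ : Nonempty B := inferInstance
  obtain ⟨s, ⟨-, hs⟩, -⟩ := hcov.existsUnique_continuousMap_lifts (ContinuousMap.id B) b
    ⟨b, (show DiscReal from (0 : ℝ))⟩ rfl
  have hs' : ∀ y, (s y).1 = y := fun y => congrFun hs y
  refine ⟨fun y => (show ℝ from (s y).2) + f (s y).1 y, fun i x hx => ?_⟩
  have hc : ContinuousAt (fun y => (Z.localTriv i (s y)).2) x := by
    have h1 : ContinuousAt (Z.localTriv i) (s x) :=
      (Z.localTriv i).continuousAt (by
        show (s x).1 ∈ U i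
        rw [hs']; exact hx)
    exact (continuous_snd.continuousAt).comp (h1.comp s.continuous.continuousAt)
  replace hc := contAt_disc.mp hc
  filter_upwards [hc] with y hy
  have hy' : ((show ℝ from (s y).2) + (f (s y).1 (s y).1 - f i (s y).1) : ℝ) =
    (show ℝ from (s x).2) + (f (s x).1 (s x).1 - f i (s x).1) := hy
  have ey : f (s y).1 y = f (s y).1 (s y).1 := by rw [hs' y]
  have ex : f (s x).1 x = f (s x).1 (s x).1 := by rw [hs' x]
  have ey' : f i y = f i (s y).1 := by rw [hs' y]
  have ex' : f i x = f i (s x).1 := by rw [hs' x]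
  rw [ey, ex, ey', ex']
  linarith

/-- **Existence of a scalar potential for an irrotational C¹ vector field on a
simply connected open subset of ℝ³.** -/
theorem stmt_0 (Ω : Set (EuclideanSpace ℝ (Fin 3))) (hΩ : IsOpen Ω)
    (hsc : SimplyConnectedSpace Ω)
    (v : EuclideanSpace ℝ (Fin 3) → EuclideanSpace ℝ (Fin 3))
    (hv : ContDiffOn ℝ 1 v Ω)
    (hirr : ∀ x ∈ Ω, ∀ u w : EuclideanSpace ℝ (Fin 3),
      ⟪fderiv ℝ v x u, w⟫ = ⟪fderiv ℝ v x w, u⟫) :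
    ∃ Φ : EuclideanSpace ℝ (Fin 3) → ℝ, ∀ x ∈ Ω, HasGradientAt Φ (v x) x := by
  have : LocallyPathConnectedSpace Ω := hΩ.locallyPathConnectedSpace
  have hd : ∀ x ∈ Ω, DifferentiableAt ℝ v x := fun x hx =>
    (hv.differentiableOn one_ne_zero).differentiableAt (hΩ.mem_nhds hx)
  have hloc : ∀ i : Ω, ∃ r > 0, Metric.ball (i : EuclideanSpace ℝ (Fin 3)) r ⊆ Ω ∧
      ∃ g : EuclideanSpace ℝ (Fin 3) → ℝ,
        ∀ a ∈ Metric.ball (i : EuclideanSpace ℝ (Fin 3)) r, HasFDerivAt g (innerSL ℝ (v a)) a := by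
    intro i
    obtain ⟨r, hr, hb⟩ := Metric.isOpen_iff.mp hΩ i i.2
    refine ⟨r, hr, hb, ?_⟩
    have hder : ∀ a ∈ Metric.ball (i : EuclideanSpace ℝ (Fin 3)) r,
        HasFDerivAt (fun x => innerSL ℝ (v x)) ((innerSL ℝ).comp (fderiv ℝ v a)) a := fun a ha =>
      (innerSL ℝ (E := EuclideanSpace ℝ (Fin 3))).hasFDerivAt.comp a (hd a (hb ha)).hasFDerivAt
    refine (convex_ball _ r).exists_forall_hasFDerivAt_of_fderiv_symmetric Metric.isOpen_ball
      (fun a ha => (hder a ha).differentiableAt.differentiableWithinAt) ?_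
    intro a ha x y
    rw [(hder a ha).fderiv]
    simpa using hirr a (hb ha) x y
  choose r hr hb g hg using hloc
  obtain ⟨Φ, hΦ⟩ := glue_local (B := Ω) (fun i => Subtype.val ⁻¹' Metric.ball (i : _) (r i))
    (fun i => Metric.isOpen_ball.preimage continuous_subtype_val)
    (fun i => Metric.mem_ball_self (hr i)) (fun i y => g i y) (by
      rintro i j x ⟨hxi, hxj⟩
      have key := (((convex_ball (i : EuclideanSpace ℝ (Fin 3)) (r i)).inter
        (convex_ball (j : EuclideanSpace ℝ (Fin 3)) (r j))).isPreconnected)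
      have ho : IsOpen (Metric.ball (i : EuclideanSpace ℝ (Fin 3)) (r i) ∩
        Metric.ball (j : EuclideanSpace ℝ (Fin 3)) (r j)) :=
        Metric.isOpen_ball.inter Metric.isOpen_ball
      have hD : ∀ a ∈ Metric.ball (i : EuclideanSpace ℝ (Fin 3)) (r i) ∩
        Metric.ball (j : EuclideanSpace ℝ (Fin 3)) (r j),
        HasFDerivAt (fun y => g i y - g j y) 0 a := fun a ha => by
          simpa using (hg i a ha.1).fun_sub (hg j a ha.2)
      filter_upwards [(ho.preimage continuous_subtype_val).mem_nhds
        (show x ∈ Subtype.val ⁻¹' _ from ⟨hxi, hxj⟩)] with y hy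
      exact ho.is_const_of_fderiv_eq_zero (𝕜 := ℝ) key
        (fun a ha => (hD a ha).differentiableAt.differentiableWithinAt)
        (fun a ha => (hD a ha).fderiv) hy ⟨hxi, hxj⟩)
  classical
  refine ⟨fun x => if h : x ∈ Ω then Φ ⟨x, h⟩ else 0, fun x hx => ?_⟩
  have h1 := hΦ ⟨x, hx⟩ ⟨x, hx⟩ (Metric.mem_ball_self (hr _))
  rw [hasGradientAt_iff_hasFDerivAt]
  have h2 : HasFDerivAt (fun y => g ⟨x, hx⟩ y + (Φ ⟨x, hx⟩ - g ⟨x, hx⟩ x))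
      (InnerProductSpace.toDual ℝ _ (v x)) x :=
    (hg ⟨x, hx⟩ x (Metric.mem_ball_self (hr _))).add_const _
  refine h2.congr_of_eventuallyEq ?_
  rw [nhds_subtype_eq_comap, Filter.eventually_comap] at h1
  filter_upwards [h1, hΩ.mem_nhds hx] with y hy hyΩ
  have := hy ⟨y, hyΩ⟩ rfl
  simp only [dif_pos hyΩ]
  linarith
end

section
/- Green's representation formula on a ball: let B = B(c, R) ⊆ ℝ³ be the open ball of center c and radius R > 0, and let φ be harmonic on an open neighborhood of the closed ball (φ is C² there and Δφ = 0). Then for every interior point x ∈ B, φ(x) = ∫_{S²} [ G(c + Rω − x) (∇φ(c + Rω) · ω) − φ(c + Rω) (∇G(c + Rω − x) · ω) ] R² dσ(ω), where ω is the outward unit normal to ∂B at the boundary point c + Rω. -/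
open MeasureTheory Metric
open scoped RealInnerProductSpace

/-- The free-space Green's function of the Laplace equation in ℝ³. -/
noncomputable def G (z : EuclideanSpace ℝ (Fin 3)) : ℝ := 1 / (4 * Real.pi * ‖z‖)

/-- The Laplacian of a scalar function on ℝ³: the sum of the three unmixed second
partial derivatives. -/
noncomputable def lap (u : EuclideanSpace ℝ (Fin 3) → ℝ)
    (y : EuclideanSpace ℝ (Fin 3)) : ℝ :=
  ∑ i : Fin 3,
    fderiv ℝ (fun z => fderiv ℝ u z (EuclideanSpace.single i 1)) y
      (EuclideanSpace.single i 1)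

local notation "ESp" => EuclideanSpace ℝ (Fin 3)

lemma hasFDerivAt_norm3 {z : ESp} (hz : z ≠ 0) :
    HasFDerivAt (fun y : ESp => ‖y‖) (‖z‖⁻¹ • innerSL ℝ z) z := by
  have h2 : HasFDerivAt (fun y : ESp => ‖y‖ ^ 2) (2 • innerSL ℝ z) z :=
    (hasStrictFDerivAt_norm_sq z).hasFDerivAt
  have h3 := h2.sqrt (by positivity)
  have h4 : (fun y : ESp => √(‖y‖ ^ 2)) = fun y => ‖y‖ := by
    funext z; exact Real.sqrt_sq (norm_nonneg _)
  rw [h4, Real.sqrt_sq (norm_nonneg _)] at h3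
  refine h3.congr_fderiv ?_
  ext w
  simp
  ring

lemma bump_exists (a b : ℝ) (hab : a < b) : ∃ g : ℝ → ℝ, Continuous g ∧ (∀ t, 0 ≤ g t) ∧
    ∫ t, g t = 1 ∧ (∀ t, t ∉ Set.Ioo a b → g t = 0) := by
  let f : ContDiffBump ((a + b) / 2 : ℝ) := ⟨(b - a) / 4, (b - a) / 2, by linarith, by linarith⟩
  refine ⟨f.normed volume, f.continuous_normed, f.nonneg_normed, f.integral_normed, ?_⟩
  intro t ht
  have h := f.support_normed_eq (μ := volume)
  by_contra hne
  apply ht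
  have : t ∈ Function.support (f.normed volume) := hne
  rw [h, Real.ball_eq_Ioo] at this
  simp only [f] at this
  constructor <;> linarith [this.1, this.2]

lemma radial_exists (c : ESp) (a b : ℝ) (ha : 0 < a) (g : ℝ → ℝ) (hg : Continuous g)
    (hg1 : ∫ t, g t = 1) (hgs : ∀ t, t ∉ Set.Ioo a b → g t = 0) :
    ∃ η : ESp → ℝ, ContDiff ℝ 1 η ∧
      (∀ y v, fderiv ℝ η y v = -(g ‖y - c‖ * ⟪‖y - c‖⁻¹ • (y - c), v⟫)) ∧
      (∀ y, ‖y - c‖ ≤ a → η y = 1) ∧ (∀ y, b ≤ ‖y - c‖ → η y = 0) := by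
  set H : ℝ → ℝ := fun r => 1 - ∫ t in a..r, g t with hH
  have hHd : ∀ r, HasDerivAt H (-g r) r := by
    intro r
    have := intervalIntegral.integral_hasDerivAt_right (hg.intervalIntegrable a r)
      (hg.stronglyMeasurableAtFilter _ _) hg.continuousAt
    simpa [hH] using this.const_sub 1
  have hHc : ContDiff ℝ 1 H := by
    rw [contDiff_one_iff_deriv]
    refine ⟨fun r => (hHd r).differentiableAt, ?_⟩
    have : deriv H = fun r => -g r := funext fun r => (hHd r).deriv
    rw [this]; exact hg.neg
  have hH1 : ∀ r, r ≤ a → H r = 1 := by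
    intro r hr
    have : ∫ t in a..r, g t = 0 := by
      rw [intervalIntegral.integral_congr (g := fun _ => (0:ℝ))]
      · simp
      · intro t ht
        rw [Set.uIcc_of_ge hr] at ht
        exact hgs t (fun h => absurd h.1 (not_lt.2 ht.2))
    simp [hH, this]
  have hH0 : ∀ r, b ≤ r → H r = 0 := by
    intro r hr
    have : ∫ t in a..r, g t = 1 := by
      rw [← hg1, intervalIntegral.integral_eq_integral_of_support_subset]
      intro t ht
      by_contra hn
      exact ht (hgs t (fun h => hn ⟨h.1, h.2.le.trans hr⟩))
    simp [hH, this]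
  have hev : (fun y : ESp => H ‖y - c‖) =ᶠ[nhds c] fun _ => 1 := by
    filter_upwards [ball_mem_nhds c ha] with y hy
    exact hH1 _ (by rw [mem_ball, dist_eq_norm] at hy; exact hy.le)
  refine ⟨fun y => H ‖y - c‖, ?_, ?_, fun y hy => hH1 _ hy, fun y hy => hH0 _ hy⟩
  · rw [contDiff_iff_contDiffAt]
    intro y
    by_cases hy : y = c
    · subst hy
      exact contDiffAt_const.congr_of_eventuallyEq hev
    · exact hHc.contDiffAt.comp y
        (((contDiffAt_id).sub contDiffAt_const).norm ℝ (by simpa [sub_eq_zero] using hy))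
  · intro y v
    by_cases hy : y = c
    · subst hy
      rw [hev.fderiv_eq]
      simp
    · have hyc : y - c ≠ 0 := by simpa [sub_eq_zero] using hy
      have h1 : HasFDerivAt (fun y : ESp => ‖y - c‖) (‖y - c‖⁻¹ • innerSL ℝ (y - c)) y := by
        have h2 := (hasFDerivAt_norm3 hyc).comp y ((hasFDerivAt_id y).sub_const c)
        exact h2
      have h5 := (hHd ‖y - c‖).comp_hasFDerivAt y h1
      have h6 : HasFDerivAt (fun y : ESp => H ‖y - c‖) _ y := h5
      rw [h6.fderiv]
      simp only [smul_apply, innerSL_apply_apply, real_inner_smul_left, smul_eq_mul]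
      ring

lemma integral_fderiv_zero (W : ESp → ℝ) (hW : ContDiff ℝ 1 W) (hc : HasCompactSupport W) (v : ESp) :
    Integrable (fun y => fderiv ℝ W y v) ∧ ∫ y, fderiv ℝ W y v = 0 := by
  have hi : Integrable (fun y => fderiv ℝ W y v) := by
    apply Continuous.integrable_of_hasCompactSupport
    · exact (hW.continuous_fderiv (by norm_num)).clm_apply continuous_const
    · exact hc.fderiv_apply ℝ v
  refine ⟨hi, ?_⟩
  have := integral_mul_fderiv_eq_neg_fderiv_mul_of_integrable (μ := (volume : Measure ESp))
    (f := fun _ => (1:ℝ)) (g := W) (v := v) (by simp) (by simpa using hi)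
    (by simpa using hW.continuous.integrable_of_hasCompactSupport hc)
    (fun x _ => by fun_prop) (fun x _ => (hW.differentiable (by norm_num)) x)
  simpa using this

lemma div_lemma (V : ESp → ESp) (O : Set ESp) (hO : IsOpen O) (hV : ContDiffOn ℝ 1 V O)
    (hdiv : ∀ y ∈ O, ∑ i : Fin 3, (fderiv ℝ V y (EuclideanSpace.single i 1)) i = 0)
    (η : ESp → ℝ) (hη : ContDiff ℝ 1 η) (hc : HasCompactSupport η) (hs : tsupport η ⊆ O) :
    ∫ y, fderiv ℝ η y (V y) = 0 := by
  set W : Fin 3 → ESp → ℝ := fun i y => η y * (V y) i with hWdef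
  have hVi : ∀ i, ∀ y ∈ O, ContDiffAt ℝ 1 (fun z => (V z) i) y := by
    intro i y hy
    have := (hV.contDiffAt (hO.mem_nhds hy))
    exact (contDiffAt_piLp 2).1 this i
  have hsW : ∀ i, tsupport (W i) ⊆ tsupport η := fun i => tsupport_mul_subset_left
  have hWc : ∀ i, ContDiff ℝ 1 (W i) := by
    intro i
    rw [contDiff_iff_contDiffAt]
    intro y
    by_cases hy : y ∉ tsupport (W i)
    · exact contDiffAt_const.congr_of_eventuallyEq (notMem_tsupport_iff_eventuallyEq.1 hy)
    rw [not_not] at hy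
    exact hη.contDiffAt.mul (hVi i y (hs (hsW i hy)))
  have hWcs : ∀ i, HasCompactSupport (W i) := fun i => hc.mul_right
  have key : ∀ y, fderiv ℝ η y (V y) =
      ∑ i, fderiv ℝ (W i) y (EuclideanSpace.single i 1) := by
    intro y
    by_cases hy : y ∈ tsupport η
    · have hyO := hs hy
      have hVd : DifferentiableAt ℝ V y :=
        (hV.contDiffAt (hO.mem_nhds hyO)).differentiableAt (by norm_num)
      have e1 : ∀ i, fderiv ℝ (W i) y (EuclideanSpace.single i 1) =
          η y * (fderiv ℝ V y (EuclideanSpace.single i 1)) i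
          + V y i * fderiv ℝ η y (EuclideanSpace.single i 1) := by
        intro i
        have h1 : HasFDerivAt (fun z => (V z) i)
            ((EuclideanSpace.proj i : ESp →L[ℝ] ℝ).comp (fderiv ℝ V y)) y :=
          (EuclideanSpace.proj i : ESp →L[ℝ] ℝ).hasFDerivAt.comp y hVd.hasFDerivAt
        have h2 := ((hη.differentiable (by norm_num)) y).hasFDerivAt.mul h1
        have h3 : HasFDerivAt (W i) _ y := h2
        rw [h3.fderiv]
        simp
      simp_rw [e1, Finset.sum_add_distrib, ← Finset.mul_sum, hdiv y hyO]
      have : V y = ∑ i, V y i • (EuclideanSpace.single i (1:ℝ) : ESp) := by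
        ext j
        fin_cases j <;> simp [Fin.sum_univ_three]
      conv_lhs => rw [this, map_sum]
      simp
    · have h0 : fderiv ℝ η y = 0 := by
        by_contra h
        exact hy (support_fderiv_subset ℝ h)
      have h1 : ∀ i, fderiv ℝ (W i) y = 0 := by
        intro i
        by_contra h
        exact hy (hsW i (support_fderiv_subset ℝ h))
      simp [h0, h1]
  simp_rw [key]
  rw [integral_finsetSum]
  · exact Finset.sum_eq_zero fun i _ => (integral_fderiv_zero (W i) (hWc i) (hWcs i) _).2
  · exact fun i _ => (integral_fderiv_zero (W i) (hWc i) (hWcs i) _).1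

lemma sphere_norm (ω : sphere (0 : ESp) 1) : ‖(ω : ESp)‖ = 1 := by
  simp

lemma sphere_mass : (volume : Measure ESp).toSphere.real Set.univ = 4 * Real.pi := by
  rw [Measure.toSphere_real_apply_univ, measureReal_def, EuclideanSpace.volume_ball_fin_three]
  have : (0:ℝ) ≤ Real.pi * 4 / 3 := by positivity
  simp [ENNReal.toReal_ofReal this]
  ring

lemma volumeIoi_integrable (f : ℝ → ℝ) :
    Integrable (fun r : Set.Ioi (0:ℝ) => f r) (Measure.volumeIoiPow 2) ↔
      IntegrableOn (fun r => r ^ 2 * f r) (Set.Ioi 0) := by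
  rw [integrableOn_iff_comap_subtypeVal measurableSet_Ioi, Measure.volumeIoiPow,
    integrable_withDensity_iff_integrable_smul', integrable_congr]
  · refine .of_forall ?_
    rintro ⟨x, hx : 0 < x⟩
    simp (disch := positivity) [ENNReal.toReal_ofReal]
  · fun_prop
  · simp

lemma volumeIoi_integral (f : ℝ → ℝ) :
    ∫ r : Set.Ioi (0:ℝ), f r ∂(Measure.volumeIoiPow 2) =
      ∫ r in Set.Ioi (0:ℝ), r ^ 2 * f r := by
  simp only [Measure.volumeIoiPow, ENNReal.ofReal]
  rw [integral_withDensity_eq_integral_smul,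
        integral_subtype_comap measurableSet_Ioi fun a ↦ Real.toNNReal (a ^ 2) • f a,
        setIntegral_congr_fun measurableSet_Ioi fun x hx ↦ ?_]
  · rw [NNReal.smul_def, Real.coe_toNNReal _ (pow_nonneg (le_of_lt hx) _), smul_eq_mul]
  · exact (measurable_subtype_coe.pow_const _).real_toNNReal

lemma polar (F : ESp → ℝ) (hF : Integrable F) :
    (∀ᵐ ω : sphere (0 : ESp) 1 ∂((volume : Measure ESp).toSphere),
      IntegrableOn (fun r : ℝ => r ^ 2 * F (r • (ω : ESp))) (Set.Ioi (0:ℝ))) ∧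
    Integrable (fun ω : sphere (0 : ESp) 1 => ∫ r in Set.Ioi (0:ℝ), r ^ 2 * F (r • (ω : ESp)))
      ((volume : Measure ESp).toSphere) ∧
    ∫ y, F y = ∫ ω : sphere (0 : ESp) 1, (∫ r in Set.Ioi (0:ℝ), r ^ 2 * F (r • (ω : ESp)))
      ∂((volume : Measure ESp).toSphere) := by
  set σ := (volume : Measure ESp).toSphere
  have hmp := (volume : Measure ESp).measurePreserving_homeomorphUnitSphereProd
  have hdim : Module.finrank ℝ ESp - 1 = 2 := by simp
  rw [hdim] at hmp
  set Q : sphere (0 : ESp) 1 × Set.Ioi (0:ℝ) → ℝ := fun p => F ((p.2 : ℝ) • (p.1 : ESp)) with hQ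
  have hcomp : ∀ y : ({0}ᶜ : Set ESp), Q (homeomorphUnitSphereProd ESp y) = F y := by
    intro y
    have : ‖(y : ESp)‖ ≠ 0 := norm_ne_zero_iff.2 y.2
    simp [hQ, smul_smul, this]
  have hFi : Integrable (fun y : ({0}ᶜ : Set ESp) => F y)
      (Measure.comap (↑) (volume : Measure ESp)) := by
    have : IntegrableOn F ({0}ᶜ : Set ESp) := hF.integrableOn
    rwa [integrableOn_iff_comap_subtypeVal (measurableSet_singleton _).compl] at this
  have hQi : Integrable Q (σ.prod (Measure.volumeIoiPow 2)) := by
    rw [← hmp.integrable_comp_emb (Homeomorph.measurableEmbedding _)]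
    refine hFi.congr (Filter.Eventually.of_forall fun y => (hcomp y).symm)
  have hint : ∫ y, F y = ∫ p, Q p ∂(σ.prod (Measure.volumeIoiPow 2)) := by
    rw [← hmp.integral_comp (Homeomorph.measurableEmbedding _)]
    simp_rw [hcomp]
    rw [integral_subtype_comap (measurableSet_singleton _).compl F, restrict_compl_singleton]
  have e := fun ω : sphere (0 : ESp) 1 => volumeIoi_integral (fun r => F (r • (ω : ESp)))
  refine ⟨?_, ?_, ?_⟩
  · filter_upwards [hQi.prod_right_ae] with ω hω
    exact (volumeIoi_integrable (fun r => F (r • (ω : ESp)))).1 hω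
  · simp_rw [← e]
    exact hQi.integral_prod_left
  · simp_rw [hint, ← e]
    exact integral_prod _ hQi

lemma polar_approx (c : ESp) (V : ESp → ESp) (g : ℝ → ℝ) (a b : ℝ) (ha : 0 ≤ a)
    (hg0 : ∀ t, 0 ≤ g t) (hg1 : ∫ t, g t = 1) (hgs : ∀ t, t ∉ Set.Ioo a b → g t = 0)
    (hF : Integrable (fun y => g ‖y - c‖ * ⟪‖y - c‖⁻¹ • (y - c), V y⟫))
    (L : sphere (0 : ESp) 1 → ℝ) (hL : Integrable L ((volume : Measure ESp).toSphere))
    (ε : ℝ)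
    (hε : ∀ ω : sphere (0 : ESp) 1, ∀ r ∈ Set.Ioo a b,
      |r ^ 2 * ⟪(ω : ESp), V (c + r • (ω : ESp))⟫ - L ω| ≤ ε) :
    |(∫ y, g ‖y - c‖ * ⟪‖y - c‖⁻¹ • (y - c), V y⟫) -
      ∫ ω, L ω ∂((volume : Measure ESp).toSphere)| ≤ 4 * Real.pi * ε := by
  set F : ESp → ℝ := fun y => g ‖y - c‖ * ⟪‖y - c‖⁻¹ • (y - c), V y⟫ with hFdef
  set F' : ESp → ℝ := fun z => F (c + z) with hF'
  have hF'i : Integrable F' := hF.comp_add_left c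
  have hFF' : ∫ y, F y = ∫ z, F' z := (integral_add_left_eq_self F c).symm
  obtain ⟨h1, h2, h3⟩ := polar F' hF'i
  have hgi : Integrable g := by
    by_contra h
    rw [integral_undef h] at hg1
    norm_num at hg1
  have hgI : ∫ r in Set.Ioi (0:ℝ), g r = 1 := by
    rw [← hg1]
    apply setIntegral_eq_integral_of_forall_compl_eq_zero
    intro t ht
    exact hgs t fun h => ht (lt_of_le_of_lt ha h.1)
  rw [hFF', h3, ← integral_sub h2 hL, ← sphere_mass, mul_comm, ← Real.norm_eq_abs]
  apply norm_integral_le_of_norm_le_const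
  filter_upwards [h1] with ω hω
  have e1 : L ω = ∫ r in Set.Ioi (0:ℝ), g r * L ω := by
    rw [integral_mul_const, hgI, one_mul]
  have e2 : ε = ∫ r in Set.Ioi (0:ℝ), g r * ε := by
    rw [integral_mul_const, hgI, one_mul]
  rw [e1, ← integral_sub hω (hgi.integrableOn.mul_const _)]
  conv_rhs => rw [e2]
  apply norm_integral_le_of_norm_le (hgi.integrableOn.mul_const _)
  filter_upwards [ae_restrict_mem measurableSet_Ioi] with r hr
  have hr' : 0 < r := hr
  have e3 : F' (r • (ω : ESp)) = g r * ⟪(ω : ESp), V (c + r • (ω : ESp))⟫ := by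
    simp only [hF', hFdef, add_sub_cancel_left, norm_smul, sphere_norm, mul_one, Real.norm_eq_abs,
      abs_of_pos hr', smul_smul, inv_mul_cancel₀ hr'.ne', one_smul]
  rw [e3]
  have e4 : r ^ 2 * (g r * ⟪(ω : ESp), V (c + r • (ω : ESp))⟫) - g r * L ω
    = g r * (r ^ 2 * ⟪(ω : ESp), V (c + r • (ω : ESp))⟫ - L ω) := by ring
  rw [e4, norm_mul, Real.norm_eq_abs, Real.norm_eq_abs, abs_of_nonneg (hg0 r)]
  by_cases hm : r ∈ Set.Ioo a b
  · exact mul_le_mul_of_nonneg_left (hε ω r hm) (hg0 r)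
  · simp [hgs r hm]

lemma integrable_radial (c : ESp) (V : ESp → ESp) (g : ℝ → ℝ) (a b : ℝ) (ha : 0 < a)
    (hg : Continuous g) (hgs : ∀ t, t ∉ Set.Ioo a b → g t = 0)
    (hV : ∀ y, a ≤ ‖y - c‖ → ‖y - c‖ ≤ b → ContinuousAt V y) :
    Integrable (fun y => g ‖y - c‖ * ⟪‖y - c‖⁻¹ • (y - c), V y⟫) := by
  set K : Set ESp := closedBall c b \ ball c a with hK
  have hKc : IsCompact K := (isCompact_closedBall c b).diff isOpen_ball
  have hKm : ∀ y, y ∈ K ↔ ‖y - c‖ ≤ b ∧ a ≤ ‖y - c‖ := by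
    intro y; simp [hK, dist_eq_norm]
  rw [← integrableOn_iff_integrable_of_support_subset (s := K)]
  · apply ContinuousOn.integrableOn_compact hKc
    intro y hy
    apply ContinuousAt.continuousWithinAt
    have h := (hKm y).1 hy
    have hne : ‖y - c‖ ≠ 0 := (lt_of_lt_of_le ha h.2).ne'
    have h0 : ContinuousAt (fun y : ESp => y - c) y := by fun_prop
    exact (hg.continuousAt.comp h0.norm).mul (((h0.norm.inv₀ hne).smul h0).inner (hV y h.2 h.1))
  · intro y hy
    rw [hKm]
    by_contra hn
    apply hy
    have : g ‖y - c‖ = 0 := hgs _ fun h => hn ⟨h.2.le, h.1.le⟩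
    simp [this]

lemma hasFDerivAt_G {z : ESp} (hz : z ≠ 0) :
    HasFDerivAt G ((-(1 / (4 * Real.pi * ‖z‖ ^ 3))) • innerSL ℝ z) z := by
  have hn : ‖z‖ ≠ 0 := norm_ne_zero_iff.2 hz
  have h := ((hasDerivAt_inv hn).comp_hasFDerivAt z (hasFDerivAt_norm3 hz)).const_mul
    (1 / (4 * Real.pi))
  have e : G = fun y : ESp => (1 / (4 * Real.pi)) * ((fun r : ℝ => r⁻¹) ∘ fun y : ESp => ‖y‖) y := by
    funext y; simp [G]; ring
  rw [e]
  refine h.congr_fderiv ?_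
  ext w
  simp
  field_simp

lemma gradient_G {z : ESp} (hz : z ≠ 0) :
    gradient G z = (-(1 / (4 * Real.pi * ‖z‖ ^ 3))) • z := by
  apply HasGradientAt.gradient
  rw [hasGradientAt_iff_hasFDerivAt]
  refine (hasFDerivAt_G hz).congr_fderiv ?_
  ext w
  simp

lemma hasFDerivAt_k {z : ESp} (hz : z ≠ 0) :
    HasFDerivAt (fun y : ESp => 1 / (4 * Real.pi * ‖y‖ ^ 3))
      ((-(3 / (4 * Real.pi * ‖z‖ ^ 5))) • innerSL ℝ z) z := by
  have hn : ‖z‖ ≠ 0 := norm_ne_zero_iff.2 hz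
  have h := ((((hasDerivAt_pow 3 ‖z‖).inv (pow_ne_zero 3 hn)).comp_hasFDerivAt z
    (hasFDerivAt_norm3 hz))).const_mul (1 / (4 * Real.pi))
  have e : (fun y : ESp => 1 / (4 * Real.pi * ‖y‖ ^ 3)) =
      fun y : ESp => (1 / (4 * Real.pi)) * (((fun r : ℝ => r ^ 3)⁻¹) ∘ fun y : ESp => ‖y‖) y := by
    funext y; simp; ring
  rw [e]
  refine h.congr_fderiv ?_
  ext w
  simp
  field_simp

lemma contDiffAt_G {z : ESp} (hz : z ≠ 0) : ContDiffAt ℝ 1 G z := by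
  unfold G
  have h1 : ContDiffAt ℝ 1 (fun y : ESp => ‖y‖) z := contDiffAt_norm ℝ hz
  exact contDiffAt_const.div (contDiffAt_const.mul h1) (by simp [hz, Real.pi_ne_zero])

/-- The Green vector field. -/
noncomputable def VF (φ : ESp → ℝ) (x y : ESp) : ESp :=
  G (y - x) • gradient φ y - φ y • gradient G (y - x)

lemma VF_eq (φ : ESp → ℝ) (x : ESp) {y : ESp} (hy : y ≠ x) :
    VF φ x y = G (y - x) • gradient φ y + (φ y * (1 / (4 * Real.pi * ‖y - x‖ ^ 3))) • (y - x) := by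
  rw [VF, gradient_G (sub_ne_zero.2 hy), smul_smul, mul_neg, neg_smul, sub_neg_eq_add]

lemma VF_eventually (φ : ESp → ℝ) (x : ESp) {y : ESp} (hy : y ≠ x) :
    VF φ x =ᶠ[nhds y] fun y => G (y - x) • gradient φ y +
      (φ y * (1 / (4 * Real.pi * ‖y - x‖ ^ 3))) • (y - x) := by
  filter_upwards [isOpen_ne.mem_nhds hy] with z hz
  exact VF_eq φ x hz

lemma gradient_coord (φ : ESp → ℝ) (y : ESp) (i : Fin 3) :
    gradient φ y i = fderiv ℝ φ y (EuclideanSpace.single i 1) := by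
  have : ⟪gradient φ y, (EuclideanSpace.single i 1 : ESp)⟫ =
      fderiv ℝ φ y (EuclideanSpace.single i 1) := by
    rw [gradient, InnerProductSpace.toDual_symm_apply]
  rw [← this, EuclideanSpace.inner_single_right]
  simp only [one_mul, conj_trivial]

lemma contDiffAt_fderiv {φ : ESp → ℝ} {U : Set ESp} (hU : IsOpen U) (hφ : ContDiffOn ℝ 2 φ U)
    {y : ESp} (hy : y ∈ U) : ContDiffAt ℝ 1 (fderiv ℝ φ) y :=
  (hφ.contDiffAt (hU.mem_nhds hy)).fderiv_right (by norm_num)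

lemma contDiffAt_gradient {φ : ESp → ℝ} {U : Set ESp} (hU : IsOpen U) (hφ : ContDiffOn ℝ 2 φ U)
    {y : ESp} (hy : y ∈ U) : ContDiffAt ℝ 1 (gradient φ) y :=
  ((InnerProductSpace.toDual ℝ ESp).symm.toContinuousLinearEquiv.contDiff.contDiffAt).comp y
    (contDiffAt_fderiv hU hφ hy)

lemma contDiffAt_VF {φ : ESp → ℝ} {U : Set ESp} (hU : IsOpen U) (hφ : ContDiffOn ℝ 2 φ U)
    (x : ESp) {y : ESp} (hy : y ∈ U) (hyx : y ≠ x) :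
    ContDiffAt ℝ 1 (VF φ x) y := by
  refine ContDiffAt.congr_of_eventuallyEq ?_ (VF_eventually φ x hyx)
  have hs : ContDiffAt ℝ 1 (fun y : ESp => y - x) y := contDiffAt_id.sub contDiffAt_const
  have hn := sub_ne_zero.2 hyx
  have h1 : ContDiffAt ℝ 1 (fun y : ESp => G (y - x)) y :=
    ContDiffAt.comp (g := G) (f := fun y : ESp => y - x) y (contDiffAt_G hn) hs
  have h2 : ContDiffAt ℝ 1 (fun y : ESp => ‖y - x‖) y := hs.norm ℝ hn
  have h3 : ContDiffAt ℝ 1 φ y := (hφ.contDiffAt (hU.mem_nhds hy)).of_le (by norm_num)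
  refine (h1.smul (contDiffAt_gradient hU hφ hy)).add ((h3.mul ?_).smul hs)
  refine contDiffAt_const.div (contDiffAt_const.mul (h2.pow 3)) ?_
  have := norm_ne_zero_iff.2 hn
  have := Real.pi_ne_zero
  positivity

lemma div_VF {φ : ESp → ℝ} {U : Set ESp} (hU : IsOpen U) (hφ : ContDiffOn ℝ 2 φ U)
    (hharm : ∀ y ∈ U, lap φ y = 0) (x : ESp) {y : ESp} (hy : y ∈ U) (hyx : y ≠ x) :
    ∑ i : Fin 3, (fderiv ℝ (VF φ x) y (EuclideanSpace.single i 1)) i = 0 := by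
  have hn := sub_ne_zero.2 hyx
  have hnn : ‖y - x‖ ≠ 0 := norm_ne_zero_iff.2 hn
  have hVd : DifferentiableAt ℝ (VF φ x) y :=
    (contDiffAt_VF hU hφ x hy hyx).differentiableAt (by norm_num)
  have hs : HasFDerivAt (fun y : ESp => y - x) (ContinuousLinearMap.id ℝ ESp) y :=
    (hasFDerivAt_id y).sub_const x
  have hG := (hasFDerivAt_G hn).comp y hs
  have hk := (hasFDerivAt_k hn).comp y hs
  have hφd : HasFDerivAt φ (fderiv ℝ φ y) y :=
    ((hφ.contDiffAt (hU.mem_nhds hy)).differentiableAt (by norm_num)).hasFDerivAt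
  have key : ∀ i : Fin 3, (fderiv ℝ (VF φ x) y (EuclideanSpace.single i 1)) i =
      G (y - x) * fderiv ℝ (fun z => fderiv ℝ φ z (EuclideanSpace.single i 1)) y
        (EuclideanSpace.single i 1) +
      φ y * (1 / (4 * Real.pi * ‖y - x‖ ^ 3)
        - (3 / (4 * Real.pi * ‖y - x‖ ^ 5)) * ((y - x) i) ^ 2) := by
    intro i
    have h1 : HasFDerivAt (fun z => (VF φ x z) i)
        ((EuclideanSpace.proj i : ESp →L[ℝ] ℝ).comp (fderiv ℝ (VF φ x) y)) y :=
      (EuclideanSpace.proj i : ESp →L[ℝ] ℝ).hasFDerivAt.comp y hVd.hasFDerivAt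
    have hp : HasFDerivAt (fun z : ESp => fderiv ℝ φ z (EuclideanSpace.single i 1))
        (fderiv ℝ (fun z => fderiv ℝ φ z (EuclideanSpace.single i 1)) y) y :=
      (((contDiffAt_fderiv hU hφ hy).differentiableAt (by norm_num)).clm_apply
        (differentiableAt_const _)).hasFDerivAt
    have hc : HasFDerivAt (fun z : ESp => (z - x) i) (EuclideanSpace.proj i : ESp →L[ℝ] ℝ) y :=
      (EuclideanSpace.proj i : ESp →L[ℝ] ℝ).hasFDerivAt.comp y hs
    have h2 := (hG.mul hp).add ((hφd.mul hk).mul hc)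
    have h3 := h2.congr_of_eventuallyEq (f₁ := fun z => (VF φ x z) i) (by
      filter_upwards [VF_eventually φ x hyx] with z hz
      rw [hz]
      simp [gradient_coord])
    have h4 := congrArg (fun T : ESp →L[ℝ] ℝ => T (EuclideanSpace.single i 1)) (h1.unique h3)
    simp only [ContinuousLinearMap.comp_apply, PiLp.proj_apply, add_apply,
      smul_apply, innerSL_apply_apply, EuclideanSpace.inner_single_right,
      ContinuousLinearMap.id_apply, Function.comp_apply, smul_eq_mul] at h4
    rw [h4]
    simp
    ring
  simp_rw [key, Finset.sum_add_distrib, ← Finset.mul_sum, Finset.sum_sub_distrib, ← Finset.mul_sum]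
  have hl : ∑ i : Fin 3, fderiv ℝ (fun z => fderiv ℝ φ z (EuclideanSpace.single i 1)) y
        (EuclideanSpace.single i 1) = 0 := hharm y hy
  rw [hl, ← EuclideanSpace.real_norm_sq_eq]
  simp
  right
  have := Real.pi_ne_zero
  field_simp
  ring

lemma flux_eq (c : ESp) (R : ℝ) (φ : ESp → ℝ) (U : Set ESp) (hU : IsOpen U)
    (hBU : closedBall c R ⊆ U) (hφ : ContDiffOn ℝ 2 φ U) (hharm : ∀ y ∈ U, lap φ y = 0)
    (x : ESp) (a₁ a₂ b₂ : ℝ) (ha₁ : ‖x - c‖ + b₂ ≤ a₁) (ha₁R : a₁ < R)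
    (ha₂ : 0 < a₂) (hab₂ : a₂ < b₂)
    (g₁ g₂ : ℝ → ℝ) (hg₁ : Continuous g₁) (hg₂ : Continuous g₂)
    (h1₁ : ∫ t, g₁ t = 1) (h1₂ : ∫ t, g₂ t = 1)
    (hs₁ : ∀ t, t ∉ Set.Ioo a₁ R → g₁ t = 0) (hs₂ : ∀ t, t ∉ Set.Ioo a₂ b₂ → g₂ t = 0) :
    Integrable (fun y => g₁ ‖y - c‖ * ⟪‖y - c‖⁻¹ • (y - c), VF φ x y⟫) ∧
    Integrable (fun y => g₂ ‖y - x‖ * ⟪‖y - x‖⁻¹ • (y - x), VF φ x y⟫) ∧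
    ∫ y, g₁ ‖y - c‖ * ⟪‖y - c‖⁻¹ • (y - c), VF φ x y⟫ =
      ∫ y, g₂ ‖y - x‖ * ⟪‖y - x‖⁻¹ • (y - x), VF φ x y⟫ := by
  have hxc := norm_nonneg (x - c)
  have htri : ∀ y, ‖y - c‖ ≤ ‖y - x‖ + ‖x - c‖ := fun y => by
    have := norm_add_le (y - x) (x - c)
    simpa using this
  have ha₁0 : 0 < a₁ := by linarith
  have hi₁ : Integrable (fun y => g₁ ‖y - c‖ * ⟪‖y - c‖⁻¹ • (y - c), VF φ x y⟫) := by
    apply integrable_radial c _ g₁ a₁ R ha₁0 hg₁ hs₁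
    intro y h1 h2
    refine (contDiffAt_VF hU hφ x (hBU (by rwa [mem_closedBall, dist_eq_norm])) ?_).continuousAt
    rintro rfl
    linarith
  have hi₂ : Integrable (fun y => g₂ ‖y - x‖ * ⟪‖y - x‖⁻¹ • (y - x), VF φ x y⟫) := by
    apply integrable_radial x _ g₂ a₂ b₂ ha₂ hg₂ hs₂
    intro y h1 h2
    refine (contDiffAt_VF hU hφ x (hBU ?_) ?_).continuousAt
    · rw [mem_closedBall, dist_eq_norm]
      linarith [htri y]
    · rintro rfl
      simp at h1
      linarith
  refine ⟨hi₁, hi₂, ?_⟩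
  obtain ⟨η₁, hη₁, hd₁, h₁1, h₁0⟩ := radial_exists c a₁ R ha₁0 g₁ hg₁ h1₁ hs₁
  obtain ⟨η₂, hη₂, hd₂, h₂1, h₂0⟩ := radial_exists x a₂ b₂ ha₂ g₂ hg₂ h1₂ hs₂
  have hsupp : Function.support (fun y => η₁ y - η₂ y) ⊆ closedBall c R \ ball x a₂ := by
    intro y hy
    rw [Function.mem_support] at hy
    constructor
    · by_contra hn
      rw [mem_closedBall, dist_eq_norm, not_le] at hn
      apply hy
      rw [h₁0 y hn.le, h₂0 y (by linarith [htri y]), sub_self]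
    · intro hn
      rw [mem_ball, dist_eq_norm] at hn
      apply hy
      rw [h₁1 y (by linarith [htri y]), h₂1 y hn.le, sub_self]
  have hKc : IsCompact (closedBall c R \ ball x a₂) := (isCompact_closedBall c R).diff isOpen_ball
  have hts : tsupport (fun y => η₁ y - η₂ y) ⊆ closedBall c R \ ball x a₂ :=
    closure_minimal hsupp hKc.isClosed
  have h0 := div_lemma (VF φ x) (U ∩ {x}ᶜ) (hU.inter isOpen_compl_singleton)
    (fun y hy => (contDiffAt_VF hU hφ x hy.1 hy.2).contDiffWithinAt)
    (fun y hy => div_VF hU hφ hharm x hy.1 hy.2) (fun y => η₁ y - η₂ y) (hη₁.sub hη₂)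
    (hKc.of_isClosed_subset (isClosed_tsupport _) hts)
    (fun y hy => ⟨hBU (hts hy).1, fun h => (hts hy).2 (by rw [h]; exact mem_ball_self ha₂)⟩)
  have e : ∀ y, fderiv ℝ (fun y => η₁ y - η₂ y) y (VF φ x y) =
      g₂ ‖y - x‖ * ⟪‖y - x‖⁻¹ • (y - x), VF φ x y⟫ -
      g₁ ‖y - c‖ * ⟪‖y - c‖⁻¹ • (y - c), VF φ x y⟫ := by
    intro y
    rw [fderiv_fun_sub (hη₁.differentiable (by norm_num) y) (hη₂.differentiable (by norm_num) y),
      sub_apply, hd₁, hd₂]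
    ring
  simp_rw [e] at h0
  rw [integral_sub hi₂ hi₁] at h0
  linarith

lemma near_R (c : ESp) (R : ℝ) (V : ESp → ESp) (hR : 0 < R)
    (hV : ∀ y ∈ sphere c R, ContinuousAt V y) :
    Integrable (fun ω : sphere (0 : ESp) 1 => R ^ 2 * ⟪(ω : ESp), V (c + R • (ω : ESp))⟫)
      ((volume : Measure ESp).toSphere) ∧
    ∀ ε > 0, ∃ δ > 0, ∀ ω : sphere (0 : ESp) 1, ∀ r ∈ Set.Ioo (R - δ) R,
      |r ^ 2 * ⟪(ω : ESp), V (c + r • (ω : ESp))⟫ -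
        R ^ 2 * ⟪(ω : ESp), V (c + R • (ω : ESp))⟫| ≤ ε := by
  set k : ℝ × sphere (0 : ESp) 1 → ℝ :=
    fun p => p.1 ^ 2 * ⟪(p.2 : ESp), V (c + p.1 • (p.2 : ESp))⟫ with hk
  have hkc : ∀ ω, ContinuousAt k (R, ω) := by
    intro ω
    have h1 : ContinuousAt (fun p : ℝ × sphere (0 : ESp) 1 => c + p.1 • (p.2 : ESp)) (R, ω) := by
      fun_prop
    have h2 : ContinuousAt (fun p : ℝ × sphere (0 : ESp) 1 => V (c + p.1 • (p.2 : ESp))) (R, ω) := by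
      refine ContinuousAt.comp (g := V) (f := fun p : ℝ × sphere (0 : ESp) 1 => c + p.1 • (p.2 : ESp))
        (hV _ ?_) h1
      simp [norm_smul, abs_of_pos hR]
    have h3 : ContinuousAt (fun p : ℝ × sphere (0 : ESp) 1 => (p.2 : ESp)) (R, ω) := by fun_prop
    have h4 : ContinuousAt (fun p : ℝ × sphere (0 : ESp) 1 => p.1 ^ 2) (R, ω) := by fun_prop
    exact h4.mul (h3.inner h2)
  have hLc : Continuous (fun ω => k (R, ω)) := by
    rw [continuous_iff_continuousAt]
    intro ω
    exact ContinuousAt.comp (g := k) (f := fun ω => (R, ω)) (hkc ω) (by fun_prop)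
  refine ⟨hLc.integrable_of_hasCompactSupport (HasCompactSupport.of_compactSpace _), ?_⟩
  intro ε hε
  have hev : ∀ᶠ r in nhds R, ∀ ω ∈ (Set.univ : Set (sphere (0 : ESp) 1)),
      |k (r, ω) - k (R, ω)| < ε := by
    apply isCompact_univ.eventually_forall_of_forall_eventually
    intro ω _
    have h1 : ContinuousAt (fun p : ℝ × sphere (0 : ESp) 1 => |k p - k (R, p.2)|) (R, ω) := by
      refine ((hkc ω).sub ?_).abs
      exact ContinuousAt.comp (g := fun ω => k (R, ω)) (f := fun p : ℝ × sphere (0 : ESp) 1 => p.2)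
        hLc.continuousAt continuousAt_snd
    exact h1.eventually_lt continuousAt_const (by simpa using hε)
  obtain ⟨δ, hδ, h⟩ := Metric.eventually_nhds_iff.1 hev
  refine ⟨δ, hδ, fun ω r hr => (h (y := r) ?_ ω trivial).le⟩
  rw [Real.dist_eq, abs_lt]
  constructor <;> linarith [hr.1, hr.2]

lemma near_x (φ : ESp → ℝ) (x : ESp) (h1 : ContinuousAt φ x) (h2 : ContinuousAt (gradient φ) x) :
    ∀ ε > 0, ∃ δ > 0, ∀ ω : sphere (0 : ESp) 1, ∀ r ∈ Set.Ioo 0 δ,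
      |r ^ 2 * ⟪(ω : ESp), VF φ x (x + r • (ω : ESp))⟫ - φ x / (4 * Real.pi)| ≤ ε := by
  intro ε hε
  have hc : ContinuousAt (fun y => ‖y - x‖ * ‖gradient φ y‖ + |φ y - φ x|) x := by
    have h0 : ContinuousAt (fun y : ESp => ‖y - x‖) x := by fun_prop
    exact (h0.mul h2.norm).add (h1.sub continuousAt_const).abs
  have hev := hc.eventually_lt (continuousAt_const (y := ε)) (by simpa using hε)
  obtain ⟨δ, hδ, h⟩ := Metric.eventually_nhds_iff.1 hev
  refine ⟨δ, hδ, fun ω r hr => ?_⟩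
  have hr0 : 0 < r := hr.1
  have hω := sphere_norm ω
  have hnr : ‖r • (ω : ESp)‖ = r := by rw [norm_smul, hω, mul_one, Real.norm_of_nonneg hr0.le]
  have hb := h (y := x + r • (ω : ESp)) (by rw [dist_eq_norm, add_sub_cancel_left, hnr]; exact hr.2)
  rw [add_sub_cancel_left, hnr] at hb
  have hne : x + r • (ω : ESp) ≠ x := by
    intro h
    rw [add_eq_left] at h
    rw [h, norm_zero] at hnr
    exact hr0.ne hnr
  rw [VF_eq φ x hne, add_sub_cancel_left, hnr, inner_add_right, real_inner_smul_right,
    real_inner_smul_right, real_inner_smul_right, real_inner_self_eq_norm_sq, hω, G, hnr]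
  set A := ⟪(ω : ESp), gradient φ (x + r • (ω : ESp))⟫ with hA
  have hAb : |A| ≤ ‖gradient φ (x + r • (ω : ESp))‖ := by
    have := abs_real_inner_le_norm (ω : ESp) (gradient φ (x + r • (ω : ESp)))
    rwa [hω, one_mul] at this
  have hpi := Real.pi_gt_three
  have e : r ^ 2 * (1 / (4 * Real.pi * r) * A +
      φ (x + r • (ω : ESp)) * (1 / (4 * Real.pi * r ^ 3)) * (r * 1 ^ 2)) - φ x / (4 * Real.pi) =
      (r * A + (φ (x + r • (ω : ESp)) - φ x)) / (4 * Real.pi) := by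
    field_simp
    ring
  rw [e, abs_div, abs_of_pos (by positivity : 0 < 4 * Real.pi), div_le_iff₀ (by positivity)]
  have h3 : |r * A + (φ (x + r • (ω : ESp)) - φ x)| ≤ ε := by
    refine (abs_add_le _ _).trans ?_
    rw [abs_mul, abs_of_pos hr0]
    have := mul_le_mul_of_nonneg_left hAb hr0.le
    linarith
  nlinarith

/-- **Green's representation formula on a ball**: if `φ` is harmonic on an open
neighborhood of the closed ball `B(c, R)`, then for every interior point `x`,
`φ(x) = ∫_{S²} [G(c + Rω − x) (∇φ(c + Rω) · ω) − φ(c + Rω) (∇G(c + Rω − x) · ω)] R² dσ(ω)`. -/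
theorem stmt_5 (c : EuclideanSpace ℝ (Fin 3)) (R : ℝ) (hR : 0 < R)
    (φ : EuclideanSpace ℝ (Fin 3) → ℝ)
    (U : Set (EuclideanSpace ℝ (Fin 3))) (hU : IsOpen U)
    (hBU : closedBall c R ⊆ U)
    (hφ : ContDiffOn ℝ 2 φ U)
    (hharm : ∀ y ∈ U, lap φ y = 0) :
    ∀ x ∈ ball c R,
      φ x = ∫ ω : sphere (0 : EuclideanSpace ℝ (Fin 3)) 1,
        (G (c + R • (ω : EuclideanSpace ℝ (Fin 3)) - x) *
            ⟪gradient φ (c + R • (ω : EuclideanSpace ℝ (Fin 3))),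
              (ω : EuclideanSpace ℝ (Fin 3))⟫
          - φ (c + R • (ω : EuclideanSpace ℝ (Fin 3))) *
            ⟪gradient G (c + R • (ω : EuclideanSpace ℝ (Fin 3)) - x),
              (ω : EuclideanSpace ℝ (Fin 3))⟫) * R ^ 2
        ∂((volume : Measure (EuclideanSpace ℝ (Fin 3))).toSphere) := by
  intro x hx
  set σ := (volume : Measure ESp).toSphere with hσ
  have hxR : ‖x - c‖ < R := by rwa [mem_ball, dist_eq_norm] at hx
  have hxU : x ∈ U := hBU (ball_subset_closedBall hx)
  have hI : ∀ ω : sphere (0 : ESp) 1,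
      (G (c + R • (ω : ESp) - x) * ⟪gradient φ (c + R • (ω : ESp)), (ω : ESp)⟫
        - φ (c + R • (ω : ESp)) * ⟪gradient G (c + R • (ω : ESp) - x), (ω : ESp)⟫) * R ^ 2 =
      R ^ 2 * ⟪(ω : ESp), VF φ x (c + R • (ω : ESp))⟫ := by
    intro ω
    rw [VF, inner_sub_right, real_inner_smul_right, real_inner_smul_right,
      real_inner_comm (ω : ESp), real_inner_comm (ω : ESp)]
    ring
  simp_rw [hI]
  obtain ⟨hL, hnR⟩ := near_R c R (VF φ x) hR (by
    intro y hy
    refine (contDiffAt_VF hU hφ x (hBU (sphere_subset_closedBall hy)) ?_).continuousAt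
    rintro rfl
    rw [mem_sphere, dist_eq_norm] at hy
    linarith)
  have hnx := near_x φ x (hφ.contDiffAt (hU.mem_nhds hxU)).continuousAt
    (contDiffAt_gradient hU hφ hxU).continuousAt
  have hpi := Real.pi_pos
  have hconst : ∫ _ω : sphere (0 : ESp) 1, φ x / (4 * Real.pi) ∂σ = φ x := by
    rw [integral_const, hσ, sphere_mass, smul_eq_mul]
    field_simp
  set A := ∫ ω : sphere (0 : ESp) 1, R ^ 2 * ⟪(ω : ESp), VF φ x (c + R • (ω : ESp))⟫ ∂σ with hA
  have main : ∀ ε > 0, |φ x - A| ≤ 8 * Real.pi * ε := by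
    intro ε hε
    obtain ⟨δ₁, hδ₁, H₁⟩ := hnR ε hε
    obtain ⟨δ₂, hδ₂, H₂⟩ := hnx ε hε
    set b₂ := min δ₂ ((R - ‖x - c‖) / 2) with hb₂
    have hb₂0 : 0 < b₂ := lt_min hδ₂ (by linarith)
    have hb₂l : b₂ ≤ δ₂ := min_le_left _ _
    have hb₂r : b₂ ≤ (R - ‖x - c‖) / 2 := min_le_right _ _
    set a₁ := max (R - δ₁) (‖x - c‖ + b₂) with ha₁
    have ha₁l : R - δ₁ ≤ a₁ := le_max_left _ _
    have ha₁r : ‖x - c‖ + b₂ ≤ a₁ := le_max_right _ _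
    have ha₁R : a₁ < R := max_lt (by linarith) (by linarith)
    obtain ⟨g₁, hg₁, hp₁, h1₁, hs₁⟩ := bump_exists a₁ R ha₁R
    obtain ⟨g₂, hg₂, hp₂, h1₂, hs₂⟩ := bump_exists (b₂ / 2) b₂ (by linarith)
    obtain ⟨i₁, i₂, he⟩ := flux_eq c R φ U hU hBU hφ hharm x a₁ (b₂ / 2) b₂ ha₁r ha₁R (by linarith)
      (by linarith) g₁ g₂ hg₁ hg₂ h1₁ h1₂ hs₁ hs₂
    have q₁ := polar_approx c (VF φ x) g₁ a₁ R (by linarith [norm_nonneg (x - c)]) hp₁ h1₁ hs₁ i₁ _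
      hL ε (fun ω r hr => H₁ ω r ⟨by linarith [hr.1], hr.2⟩)
    have q₂ := polar_approx x (VF φ x) g₂ (b₂ / 2) b₂ (by linarith) hp₂ h1₂ hs₂ i₂
      (fun _ => φ x / (4 * Real.pi)) (integrable_const _) ε
      (fun ω r hr => H₂ ω r ⟨by linarith [hr.1], by linarith [hr.2]⟩)
    rw [← he, hconst] at q₂
    rw [abs_le] at q₁ q₂ ⊢
    constructor <;> linarith [q₁.1, q₁.2, q₂.1, q₂.2]
  by_contra hne
  have hpos : 0 < |φ x - A| := abs_pos.2 (sub_ne_zero.2 hne)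
  have := main (|φ x - A| / (16 * Real.pi)) (by positivity)
  have e : 8 * Real.pi * (|φ x - A| / (16 * Real.pi)) = |φ x - A| / 2 := by
    field_simp
    ring
  rw [e] at this
  linarith
end

section
/- Boundary trace of the representation formula with coefficient c(x) = 1/2 on a sphere: let B = B(c, R) ⊆ ℝ³ be the open ball of center c and radius R > 0, and let φ be harmonic on an open neighborhood of the closed ball. Then for every boundary point x with ‖x − c‖ = R, the function ω ↦ [ G(c + Rω − x) (∇φ(c + Rω) · ω) − φ(c + Rω) (∇G(c + Rω − x) · ω) ] R², defined for c + Rω ≠ x, is integrable on S² with respect to σ, and (1/2) φ(x) = ∫_{S²} [ G(c + Rω − x) (∇φ(c + Rω) · ω) − φ(c + Rω) (∇G(c + Rω − x) · ω) ] R² dσ(ω). -/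
open MeasureTheory Metric
open scoped RealInnerProductSpace

abbrev E3 := EuclideanSpace ℝ (Fin 3)

noncomputable abbrev sig : Measure (sphere (0 : E3) 1) := (volume : Measure E3).toSphere

lemma polar_aux (f : E3 → ℝ) (hf : Integrable f) :
    ∫ y, f y = ∫ r in Set.Ioi (0 : ℝ), r ^ 2 * ∫ ω : sphere (0 : E3) 1, f (r • (ω : E3)) ∂sig := by
  have hmp := (volume : Measure E3).measurePreserving_homeomorphUnitSphereProd
  have hemb := (homeomorphUnitSphereProd E3).measurableEmbedding
  have hd : Module.finrank ℝ E3 - 1 = 2 := by simp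
  rw [hd] at hmp
  set g : sphere (0 : E3) 1 × Set.Ioi (0 : ℝ) → ℝ := fun p => f ((p.2 : ℝ) • (p.1 : E3)) with hg
  have hgf : ∀ x : ({0}ᶜ : Set E3), g (homeomorphUnitSphereProd E3 x) = f x := by
    intro x
    have : ((homeomorphUnitSphereProd E3).symm (homeomorphUnitSphereProd E3 x) : E3) = x := by
      simp
    rw [homeomorphUnitSphereProd_symm_apply_coe] at this
    simp only [hg]
    rw [this]
  have hgInt : Integrable g (sig.prod (.volumeIoiPow 2)) := by
    rw [← hmp.integrable_comp_emb hemb]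
    have : g ∘ (homeomorphUnitSphereProd E3) = f ∘ Subtype.val := by
      funext x; exact hgf x
    rw [this, ← integrableOn_iff_comap_subtypeVal (by measurability)]
    exact hf.integrableOn
  calc ∫ y, f y = ∫ x : ({(0)}ᶜ : Set E3), f x ∂((volume : Measure E3).comap Subtype.val) := by
        rw [integral_subtype_comap (measurableSet_singleton _).compl f,
          restrict_compl_singleton]
    _ = ∫ p, g p ∂(sig.prod (.volumeIoiPow 2)) := by
        rw [← hmp.integral_comp hemb]
        simp only [hgf]
    _ = ∫ r : Set.Ioi (0 : ℝ), ∫ ω, g (ω, r) ∂sig ∂(.volumeIoiPow 2) := by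
        rw [integral_prod_symm _ hgInt]
    _ = _ := by
        simp only [Measure.volumeIoiPow, ENNReal.ofReal]
        rw [integral_withDensity_eq_integral_smul,
          integral_subtype_comap measurableSet_Ioi
            fun a ↦ Real.toNNReal (a ^ 2) • ∫ ω : sphere (0 : E3) 1, f (a • (ω : E3)) ∂sig,
          setIntegral_congr_fun measurableSet_Ioi fun x hx ↦ ?_]
        · simp only [NNReal.smul_def, Real.coe_toNNReal _ (pow_nonneg (Set.mem_Ioi.1 hx).le _), smul_eq_mul]
        · exact (measurable_subtype_coe.pow_const _).real_toNNReal

lemma integral_partial_zero (H : E3 → ℝ) (hH : ContDiff ℝ 1 H) (hc : HasCompactSupport H) (v : E3) :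
    Integrable (fun y => fderiv ℝ H y v) ∧ ∫ y, fderiv ℝ H y v = 0 := by
  have hcont : Continuous (fun y => fderiv ℝ H y v) :=
    (hH.continuous_fderiv one_ne_zero).clm_apply continuous_const
  have hi : Integrable (fun y => fderiv ℝ H y v) := by
    refine hcont.integrable_of_hasCompactSupport ?_
    exact (hc.fderiv ℝ).comp_left (g := fun L : E3 →L[ℝ] ℝ => L v) (by simp)
  have := integral_mul_fderiv_eq_neg_fderiv_mul_of_integrable (μ := (volume : Measure E3))
    (f := fun _ => (1 : ℝ)) (g := H) (v := v) (by simp) (by simpa using hi)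
    (by simpa using hH.continuous.integrable_of_hasCompactSupport hc)
    (by intros; fun_prop) (by intro x _; exact hH.differentiable one_ne_zero x)
  refine ⟨hi, ?_⟩
  simpa using this

/-- Integration on the sphere of a function continuous on a ball: continuity in the radius. -/
lemma sphere_cont (f : E3 → E3 → ℝ) (s : Set ℝ) (hs : IsOpen s)
    (hf : ContinuousOn (fun p : ℝ × E3 => f (p.1 • p.2) p.2) (s ×ˢ sphere 0 1)) :
    ContinuousOn (fun r : ℝ => ∫ ω : sphere (0 : E3) 1, f (r • (ω : E3)) ω ∂sig) s := by
  rw [continuousOn_iff_continuous_domRestrict]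
  have : LocallyCompactSpace s := hs.locallyCompactSpace
  have h := continuous_parametric_integral_of_continuous (μ := sig) (X := s)
    (f := fun (r : s) (ω : sphere (0 : E3) 1) => f ((r : ℝ) • (ω : E3)) ω)
    (s := Set.univ) ?_ isCompact_univ
  · simpa [Set.domRestrict_def] using h
  · have := hf.comp_continuous (f := fun p : s × sphere (0 : E3) 1 => ((p.1 : ℝ), (p.2 : E3)))
      (by fun_prop) (by rintro ⟨a, b⟩; exact ⟨a.2, b.2⟩)
    exact this

lemma flux_test (F : Fin 3 → E3 → ℝ) (hF : ∀ i, ContDiffOn ℝ 1 (F i) (ball 0 1))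
    (hdiv : ∀ y ∈ ball (0 : E3) 1, ∑ i, fderiv ℝ (F i) y (EuclideanSpace.single i 1) = 0)
    (g : ℝ → ℝ) (hg : Continuous g) (b : ℝ) (hb0 : 0 < b) (hb : b < 1) (hgb : ∀ r, b ≤ r → g r = 0) :
    Integrable (fun y : E3 => g ‖y‖ * ∑ i, F i y * y i) ∧
    ∫ y : E3, g ‖y‖ * ∑ i, F i y * y i = 0 := by
  set k : ℝ → ℝ := fun s => g (√s) with hk
  have hkc : Continuous k := hg.comp Real.continuous_sqrt
  set η : ℝ → ℝ := fun s => ∫ t in (1 : ℝ)..s, k t with hη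
  have hηd : ∀ s, HasDerivAt η (k s) s := fun s => hkc.integral_hasStrictDerivAt 1 s |>.hasDerivAt
  have hηC : ContDiff ℝ 1 η := by
    rw [contDiff_one_iff_deriv]
    refine ⟨fun s => (hηd s).differentiableAt, ?_⟩
    have : deriv η = k := funext fun s => (hηd s).deriv
    rw [this]; exact hkc
  have hkb : ∀ s, b ^ 2 ≤ s → k s = 0 := fun s hs => hgb _ (Real.le_sqrt_of_sq_le hs)
  have hb2 : b ^ 2 < 1 := by nlinarith
  have hηb : ∀ s, b ^ 2 ≤ s → η s = 0 := by
    intro s hs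
    simp only [hη]
    rw [intervalIntegral.integral_congr (g := fun _ => (0 : ℝ))]
    · simp
    · intro t ht
      apply hkb
      rcases Set.mem_uIcc.1 ht with h | h <;> linarith [h.1]
  set ψ : E3 → ℝ := fun y => η (‖y‖ ^ 2) with hψ
  have hψd : ∀ y, HasFDerivAt ψ ((k (‖y‖ ^ 2)) • (2 • (innerSL ℝ y))) y := by
    intro y
    exact (hηd (‖y‖ ^ 2)).comp_hasFDerivAt y (hasStrictFDerivAt_norm_sq y).hasFDerivAt
  have hψC : ContDiff ℝ 1 ψ := hηC.comp (contDiff_norm_sq ℝ)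
  have hψ0 : ∀ y, b ≤ ‖y‖ → ψ y = 0 := fun y hy => hηb _ (by gcongr)
  have hHC : ∀ i, ContDiff ℝ 1 (fun y => ψ y * F i y) := by
    intro i
    rw [contDiff_iff_contDiffAt]
    intro y
    by_cases hy : y ∈ ball (0 : E3) 1
    · exact hψC.contDiffAt.mul ((hF i).contDiffAt (isOpen_ball.mem_nhds hy))
    · have : (fun y => ψ y * F i y) =ᶠ[nhds y] fun _ => 0 := by
        have : ∀ᶠ z in nhds y, b < ‖z‖ :=
          continuous_norm.continuousAt.eventually_mem (Ioi_mem_nhds (by simp at hy; linarith))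
        filter_upwards [this] with z hz
        rw [hψ0 z hz.le, zero_mul]
      exact contDiffAt_const.congr_of_eventuallyEq this
  have hHs : ∀ i, HasCompactSupport (fun y => ψ y * F i y) := by
    intro i
    refine HasCompactSupport.intro (isCompact_closedBall (0 : E3) b) ?_
    intro y hy
    simp at hy
    rw [hψ0 y hy.le, zero_mul]
  have key : ∀ y : E3, ∑ i, fderiv ℝ (fun y => ψ y * F i y) y (EuclideanSpace.single i 1)
      = 2 * (g ‖y‖ * ∑ i, F i y * y i) := by
    intro y
    by_cases hy : y ∈ ball (0 : E3) 1
    · have h1 : ∀ i, fderiv ℝ (fun y => ψ y * F i y) y (EuclideanSpace.single i 1)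
          = ψ y * fderiv ℝ (F i) y (EuclideanSpace.single i 1) + 2 * (g ‖y‖ * (F i y * y i)) := by
        intro i
        have hFd : HasFDerivAt (F i) (fderiv ℝ (F i) y) y :=
          (((hF i).contDiffAt (isOpen_ball.mem_nhds hy)).differentiableAt one_ne_zero).hasFDerivAt
        have := ((hψd y).mul hFd).fderiv
        have h2 := congrArg (fun L => L (EuclideanSpace.single i 1)) this
        refine h2.trans ?_
        simp [hk, EuclideanSpace.inner_single_right]
        ring
      simp only [h1]
      rw [Finset.sum_add_distrib, ← Finset.mul_sum, hdiv y hy, ← Finset.mul_sum, ← Finset.mul_sum]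
      ring
    · have hy1 : 1 ≤ ‖y‖ := by simpa using hy
      rw [hgb ‖y‖ (by linarith)]
      have : ∀ i, (fun y => ψ y * F i y) =ᶠ[nhds y] fun _ => 0 := by
        intro i
        have : ∀ᶠ z in nhds y, b < ‖z‖ :=
          continuous_norm.continuousAt.eventually_mem (Ioi_mem_nhds (by linarith))
        filter_upwards [this] with z hz
        rw [hψ0 z hz.le, zero_mul]
      rw [zero_mul, mul_zero]
      refine Finset.sum_eq_zero fun i _ => ?_
      rw [(this i).fderiv_eq]
      simp
  have hi := fun i => integral_partial_zero _ (hHC i) (hHs i) (EuclideanSpace.single i 1)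
  have hI : Integrable (fun y : E3 => 2 * (g ‖y‖ * ∑ i, F i y * y i)) := by
    simp only [← key]
    exact integrable_finsetSum _ fun i _ => (hi i).1
  constructor
  · have := hI.const_mul (1/2)
    refine this.congr (Filter.Eventually.of_forall fun y => ?_)
    simp
  · have : ∫ y : E3, 2 * (g ‖y‖ * ∑ i, F i y * y i) = 0 := by
      simp only [← key]
      rw [integral_finsetSum _ fun i _ => (hi i).1]
      simp [fun i => (hi i).2]
    rw [integral_const_mul] at this
    linarith

lemma flux_zero (F : Fin 3 → E3 → ℝ) (hF : ∀ i, ContDiffOn ℝ 1 (F i) (ball 0 1))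
    (hdiv : ∀ y ∈ ball (0 : E3) 1, ∑ i, fderiv ℝ (F i) y (EuclideanSpace.single i 1) = 0)
    (r : ℝ) (hr0 : 0 < r) (hr1 : r < 1) :
    ∫ ω : sphere (0 : E3) 1, ∑ i, F i (r • (ω : E3)) * (ω : E3) i ∂sig = 0 := by
  set h : ℝ → ℝ := fun r => ∫ ω : sphere (0 : E3) 1, ∑ i, F i (r • (ω : E3)) * (ω : E3) i ∂sig with hh
  have hcont : ContinuousOn h (Set.Ioo 0 1) := by
    apply sphere_cont (fun y ω => ∑ i, F i y * ω i) _ isOpen_Ioo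
    apply continuousOn_finsetSum
    intro i _
    apply ContinuousOn.mul
    · apply (hF i).continuousOn.comp (by fun_prop)
      rintro ⟨a, w⟩ ⟨ha, hw⟩
      simp at ha hw ⊢
      rw [norm_smul, hw, Real.norm_eq_abs, abs_of_pos ha.1]; linarith
    · fun_prop
  have hcont' : ContinuousOn (fun r => r ^ 3 * h r) (Set.Ioo 0 1) := by fun_prop
  have hae := isOpen_Ioo.ae_eq_zero_of_integral_contDiff_smul_eq_zero (μ := volume) (U := Set.Ioo (0:ℝ) 1)
    (f := fun r => r ^ 3 * h r) (hcont'.locallyIntegrableOn measurableSet_Ioo) ?_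
  · have := Measure.eqOn_open_of_ae_eq (μ := volume) (U := Set.Ioo (0:ℝ) 1) (f := fun r => r ^ 3 * h r)
      (g := fun _ => 0) ((ae_restrict_iff' measurableSet_Ioo).2 hae) isOpen_Ioo hcont' continuousOn_const
    have := this ⟨hr0, hr1⟩
    simp [hr0.ne'] at this
    exact this
  · intro g hgs hgc hgt
    obtain ⟨b, hb0, hb1, hgb⟩ : ∃ b : ℝ, 0 < b ∧ b < 1 ∧ ∀ r, b ≤ r → g r = 0 := by
      rcases (tsupport g).eq_empty_or_nonempty with he | hne
      · refine ⟨1/2, by norm_num, by norm_num, fun r _ => ?_⟩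
        exact image_eq_zero_of_notMem_tsupport (by simp [he])
      · obtain ⟨m, hm, hmax⟩ := hgc.isCompact.exists_isGreatest hne
        have hm1 := hgt hm
        refine ⟨(m + 1) / 2, by linarith [hm1.1], by linarith [hm1.2], fun r hr => ?_⟩
        refine image_eq_zero_of_notMem_tsupport fun hrt => ?_
        have := hmax hrt
        linarith [hm1.2]
    obtain ⟨hi, h0⟩ := flux_test F hF hdiv g hgs.continuous b hb0 hb1 hgb
    rw [polar_aux _ hi] at h0
    rw [← h0, ← setIntegral_eq_integral_of_forall_compl_eq_zero (s := Set.Ioi 0)]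
    · refine setIntegral_congr_fun measurableSet_Ioi fun x hx => ?_
      have hx0 : 0 < x := hx
      have hn : ∀ ω : sphere (0 : E3) 1, ‖x • (ω : E3)‖ = x := by
        intro ω; rw [norm_smul]; simp [hx0.le]
      simp only [hn, smul_eq_mul, hh]
      rw [integral_const_mul]
      have : ∀ ω : sphere (0 : E3) 1, ∑ i, F i (x • (ω : E3)) * (x • (ω : E3)) i
          = x * ∑ i, F i (x • (ω : E3)) * (ω : E3) i := by
        intro ω
        rw [Finset.mul_sum]
        refine Finset.sum_congr rfl fun i _ => ?_
        simp; ring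
      simp only [this]
      rw [integral_const_mul]; ring
    · intro x hx
      rw [image_eq_zero_of_notMem_tsupport fun hxt => hx (hgt hxt).1, zero_smul]

lemma sum_coord (L : E3 →L[ℝ] ℝ) (w : E3) : ∑ i, L (EuclideanSpace.single i 1) * w i = L w := by
  have : w = ∑ i, w i • EuclideanSpace.single i (1 : ℝ) := by
    have := (EuclideanSpace.basisFun (Fin 3) ℝ).sum_repr w
    simpa using this.symm
  conv_rhs => rw [this]
  rw [map_sum]
  refine Finset.sum_congr rfl fun i _ => ?_
  rw [map_smul, smul_eq_mul, mul_comm]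

lemma green (u v : E3 → ℝ) (hu : ContDiffOn ℝ 2 u (ball 0 1)) (hv : ContDiffOn ℝ 2 v (ball 0 1))
    (lu : ∀ y ∈ ball (0 : E3) 1, lap u y = 0) (lv : ∀ y ∈ ball (0 : E3) 1, lap v y = 0)
    (r : ℝ) (hr0 : 0 < r) (hr1 : r < 1) :
    ∫ ω : sphere (0 : E3) 1, (u (r • (ω : E3)) * fderiv ℝ v (r • (ω : E3)) ω
      - v (r • (ω : E3)) * fderiv ℝ u (r • (ω : E3)) ω) ∂sig = 0 := by
  have hpd : ∀ w : E3 → ℝ, ContDiffOn ℝ 2 w (ball 0 1) → ∀ e : E3,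
      ContDiffOn ℝ 1 (fun y => fderiv ℝ w y e) (ball 0 1) := by
    intro w hw e
    exact (hw.fderiv_of_isOpen isOpen_ball (by norm_num)).clm_apply contDiffOn_const
  have hd : ∀ w : E3 → ℝ, ContDiffOn ℝ 1 w (ball 0 1) → ∀ y ∈ ball (0 : E3) 1,
      HasFDerivAt w (fderiv ℝ w y) y := by
    intro w hw y hy
    exact ((hw.contDiffAt (isOpen_ball.mem_nhds hy)).differentiableAt one_ne_zero).hasFDerivAt
  have hu1 : ContDiffOn ℝ 1 u (ball 0 1) := hu.of_le (by norm_num)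
  have hv1 : ContDiffOn ℝ 1 v (ball 0 1) := hv.of_le (by norm_num)
  have := flux_zero (fun i y => u y * fderiv ℝ v y (EuclideanSpace.single i 1)
      - v y * fderiv ℝ u y (EuclideanSpace.single i 1)) ?_ ?_ r hr0 hr1
  · rw [← this]
    congr 1
    funext ω
    rw [← sum_coord (fderiv ℝ v _) ω, ← sum_coord (fderiv ℝ u _) ω, Finset.mul_sum, Finset.mul_sum,
      ← Finset.sum_sub_distrib]
    refine Finset.sum_congr rfl fun i _ => ?_
    ring
  · intro i
    exact (hu1.mul (hpd v hv _)).sub (hv1.mul (hpd u hu _))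
  · intro y hy
    have h1 : ∀ i : Fin 3, fderiv ℝ (fun y => u y * fderiv ℝ v y (EuclideanSpace.single i 1)
      - v y * fderiv ℝ u y (EuclideanSpace.single i 1)) y (EuclideanSpace.single i 1)
      = u y * fderiv ℝ (fun z => fderiv ℝ v z (EuclideanSpace.single i 1)) y (EuclideanSpace.single i 1)
      - v y * fderiv ℝ (fun z => fderiv ℝ u z (EuclideanSpace.single i 1)) y (EuclideanSpace.single i 1) := by
      intro i
      have := (((hd u hu1 y hy).mul (hd _ (hpd v hv (EuclideanSpace.single i 1)) y hy)).sub
        ((hd v hv1 y hy).mul (hd _ (hpd u hu (EuclideanSpace.single i 1)) y hy))).fderiv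
      have h2 := congrArg (fun L => L (EuclideanSpace.single i 1)) this
      refine h2.trans ?_
      simp
      ring
    simp only [h1]
    rw [Finset.sum_sub_distrib, ← Finset.mul_sum, ← Finset.mul_sum]
    have a := lu y hy
    have b := lv y hy
    unfold lap at a b
    rw [a, b]; ring

/-- derivative of the Newton kernel -/
lemma ker_deriv (ξ y : E3) (h : y ≠ ξ) :
    HasFDerivAt (fun z : E3 => ‖z - ξ‖⁻¹) (-(‖y - ξ‖⁻¹ ^ 3) • innerSL ℝ (y - ξ)) y := by
  have h0 : ‖y - ξ‖ ≠ 0 := norm_ne_zero_iff.2 (sub_ne_zero.2 h)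
  have h1 : HasFDerivAt (fun z : E3 => ‖z - ξ‖ ^ 2) (2 • innerSL ℝ (y - ξ)) y := by
    have := (hasStrictFDerivAt_norm_sq (y - ξ)).hasFDerivAt.comp y ((hasFDerivAt_id y).sub_const ξ)
    exact this
  have h2 := (h1.sqrt (by positivity))
  have h3 : (fun z : E3 => √(‖z - ξ‖ ^ 2)) = fun z => ‖z - ξ‖ := by
    funext z; exact Real.sqrt_sq (norm_nonneg _)
  rw [h3, Real.sqrt_sq (norm_nonneg _)] at h2
  have h4 := (hasDerivAt_inv h0).comp_hasFDerivAt y h2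
  refine h4.congr_fderiv ?_
  ext w
  simp
  field_simp

lemma ker_contDiffOn (ξ : E3) : ContDiffOn ℝ 2 (fun z : E3 => ‖z - ξ‖⁻¹) {ξ}ᶜ := by
  intro y hy
  have h0 : y - ξ ≠ 0 := sub_ne_zero.2 hy
  refine ContDiffAt.contDiffWithinAt ?_
  refine ContDiffAt.inv ?_ (norm_ne_zero_iff.2 h0)
  exact (contDiffAt_id.sub contDiffAt_const).norm ℝ h0

lemma ker_lap (ξ y : E3) (h : y ≠ ξ) : lap (fun z : E3 => ‖z - ξ‖⁻¹) y = 0 := by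
  have h0 : ‖y - ξ‖ ≠ 0 := norm_ne_zero_iff.2 (sub_ne_zero.2 h)
  have h1 : ∀ i : Fin 3, fderiv ℝ (fun z => fderiv ℝ (fun z : E3 => ‖z - ξ‖⁻¹) z (EuclideanSpace.single i 1)) y
      (EuclideanSpace.single i 1) = 3 * ‖y - ξ‖⁻¹ ^ 5 * ((y - ξ) i) ^ 2 - ‖y - ξ‖⁻¹ ^ 3 := by
    intro i
    have he : (fun z => fderiv ℝ (fun z : E3 => ‖z - ξ‖⁻¹) z (EuclideanSpace.single i 1))
        =ᶠ[nhds y] fun z => -(‖z - ξ‖⁻¹ ^ 3) * (innerSL ℝ (EuclideanSpace.single i (1:ℝ))) (z - ξ) := by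
      filter_upwards [isOpen_compl_singleton.mem_nhds h] with z hz
      rw [(ker_deriv ξ z hz).fderiv]
      simp [EuclideanSpace.inner_single_left, EuclideanSpace.inner_single_right]
    rw [he.fderiv_eq]
    have h2 := ((ker_deriv ξ y h).pow 3).neg.mul
      (((innerSL ℝ (EuclideanSpace.single i (1:ℝ))).hasFDerivAt (x := y - ξ)).comp y
        ((hasFDerivAt_id y).sub_const ξ))
    have h3 := congrArg (fun L => L (EuclideanSpace.single i 1)) h2.fderiv
    refine h3.trans ?_
    simp [EuclideanSpace.inner_single_left, EuclideanSpace.inner_single_right]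
    field_simp
    ring
  unfold lap
  simp only [h1]
  have h5 : ‖y - ξ‖ ^ 2 = ∑ i, ((y - ξ) i) ^ 2 := EuclideanSpace.real_norm_sq_eq _
  rw [Finset.sum_sub_distrib, ← Finset.mul_sum, ← h5]
  simp
  field_simp
  ring

lemma sig_univ : sig.real Set.univ = 4 * Real.pi := by
  rw [Measure.toSphere_real_apply_univ, measureReal_def, EuclideanSpace.volume_ball_fin_three]
  simp [ENNReal.toReal_ofReal (show 0 ≤ Real.pi * 4 / 3 by positivity)]
  ring

lemma ker_lower (ξ : E3) (hξ : ‖ξ‖ = 1) (r : ℝ) (hr : 0 ≤ r) (ω : sphere (0 : E3) 1) :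
    1 - r ≤ ‖r • (ω : E3) - ξ‖ := by
  have h1 := norm_sub_norm_le ξ (r • (ω : E3))
  rw [norm_smul, hξ, norm_sub_rev] at h1
  simpa [abs_of_nonneg hr] using h1

lemma ker_ne (ξ : E3) (hξ : ‖ξ‖ = 1) (y : E3) (hy : y ∈ ball (0 : E3) 1) : y ≠ ξ := by
  rintro rfl
  simp [hξ] at hy

lemma ker_radial (ξ : E3) (hξ : ‖ξ‖ = 1) (r : ℝ) (hr0 : 0 < r) (hr1 : r < 1) (ω : sphere (0 : E3) 1) :
    2 * r * fderiv ℝ (fun z : E3 => ‖z - ξ‖⁻¹) (r • (ω : E3)) ω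
      = -‖r • (ω : E3) - ξ‖⁻¹ + (1 - r ^ 2) * ‖r • (ω : E3) - ξ‖⁻¹ ^ 3 := by
  have hlow := ker_lower ξ hξ r hr0.le ω
  have hN : 0 < ‖r • (ω : E3) - ξ‖ := by linarith
  have hne : r • (ω : E3) ≠ ξ := by
    intro h; rw [h] at hN; simp at hN
  have hω : ‖(ω : E3)‖ = 1 := by simp
  have h1 : ‖r • (ω : E3) - ξ‖ ^ 2 = r ^ 2 - 2 * (r * ⟪(ω : E3), ξ⟫) + 1 := by
    rw [norm_sub_sq_real, norm_smul, hω, hξ, real_inner_smul_left, Real.norm_eq_abs, mul_one, sq_abs]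
    norm_num
  have h2 : 2 * r * ⟪r • (ω : E3) - ξ, (ω : E3)⟫ = ‖r • (ω : E3) - ξ‖ ^ 2 + r ^ 2 - 1 := by
    rw [h1, inner_sub_left, real_inner_smul_left, real_inner_self_eq_norm_sq, hω, real_inner_comm]
    ring
  rw [(ker_deriv ξ _ hne).fderiv]
  simp only [smul_apply, innerSL_apply_apply, smul_eq_mul]
  set N := ‖r • (ω : E3) - ξ‖
  calc 2 * r * (-(N⁻¹ ^ 3) * ⟪r • (ω : E3) - ξ, (ω : E3)⟫)
      = -(N⁻¹ ^ 3) * (2 * r * ⟪r • (ω : E3) - ξ, (ω : E3)⟫) := by ring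
    _ = _ := by
      rw [h2]; field_simp; ring

lemma smul_mem_ball (r : ℝ) (hr0 : 0 ≤ r) (hr1 : r < 1) (ω : sphere (0 : E3) 1) :
    r • (ω : E3) ∈ ball (0 : E3) 1 := by
  simp [norm_smul, abs_of_nonneg hr0, hr1]

lemma cont_int (f : sphere (0 : E3) 1 → ℝ) (hf : Continuous f) : Integrable f sig :=
  hf.integrable_of_hasCompactSupport (HasCompactSupport.of_compactSpace f)

lemma cont_val (u : E3 → ℝ) (hu : ContDiffOn ℝ 2 u (ball 0 1)) (r : ℝ) (hr0 : 0 ≤ r) (hr1 : r < 1) :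
    Continuous (fun ω : sphere (0 : E3) 1 => u (r • (ω : E3))) :=
  hu.continuousOn.comp_continuous (by fun_prop) (smul_mem_ball r hr0 hr1)

lemma cont_der (u : E3 → ℝ) (hu : ContDiffOn ℝ 2 u (ball 0 1)) (r : ℝ) (hr0 : 0 ≤ r) (hr1 : r < 1) :
    Continuous (fun ω : sphere (0 : E3) 1 => fderiv ℝ u (r • (ω : E3)) ω) := by
  have h := (hu.continuousOn_fderiv_of_isOpen isOpen_ball (by norm_num)).comp_continuous
    (f := fun ω : sphere (0 : E3) 1 => r • (ω : E3)) (by fun_prop) (smul_mem_ball r hr0 hr1)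
  exact h.clm_apply continuous_subtype_val

lemma ker_cd_ball (ξ : E3) (hξ : ‖ξ‖ = 1) : ContDiffOn ℝ 2 (fun z : E3 => ‖z - ξ‖⁻¹) (ball 0 1) :=
  (ker_contDiffOn ξ).mono fun y hy => ker_ne ξ hξ y hy

lemma ker_flux (ξ : E3) (hξ : ‖ξ‖ = 1) (r : ℝ) (hr0 : 0 < r) (hr1 : r < 1) :
    ∫ ω : sphere (0 : E3) 1, fderiv ℝ (fun z : E3 => ‖z - ξ‖⁻¹) (r • (ω : E3)) ω ∂sig = 0 := by
  have := green (fun _ => 1) (fun z : E3 => ‖z - ξ‖⁻¹) contDiffOn_const (ker_cd_ball ξ hξ)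
    (by intro y _; simp [lap]) (fun y hy => ker_lap ξ y (ker_ne ξ hξ y hy)) r hr0 hr1
  simpa using this

lemma ker_mean (ξ : E3) (hξ : ‖ξ‖ = 1) (r : ℝ) (hr0 : 0 < r) (hr1 : r < 1) :
    ∫ ω : sphere (0 : E3) 1, ‖r • (ω : E3) - ξ‖⁻¹ ∂sig = 4 * Real.pi := by
  set M : ℝ → ℝ := fun r => ∫ ω : sphere (0 : E3) 1, ‖r • (ω : E3) - ξ‖⁻¹ ∂sig with hM
  have hM0 : M 0 = 4 * Real.pi := by
    have h := sig_univ
    rw [Measure.toSphere_real_apply_univ] at h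
    simp at h
    simp [hM, hξ, h]
  have hMc : ContinuousOn M (Set.Ioo (-1) 1) := by
    refine sphere_cont (fun y _ => ‖y - ξ‖⁻¹) _ isOpen_Ioo ?_
    refine ContinuousOn.inv₀ (by fun_prop) ?_
    rintro ⟨a, w⟩ ⟨ha, hw⟩ h
    have hw1 : ‖w‖ = 1 := by simpa using hw
    have : a • w = ξ := by simpa [sub_eq_zero] using h
    have h2 := congrArg norm this
    rw [norm_smul, hw1, hξ, mul_one, Real.norm_eq_abs] at h2
    have : |a| < 1 := abs_lt.2 ha
    linarith
  have hMd : ∀ x ∈ Set.Ioo 0 r, HasDerivAt M 0 x := by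
    intro x hx
    have hx1 : x < 1 := hx.2.trans hr1
    have := hasDerivAt_integral_of_dominated_loc_of_deriv_le (𝕜 := ℝ) (μ := sig)
      (F := fun (t : ℝ) (ω : sphere (0 : E3) 1) => ‖t • (ω : E3) - ξ‖⁻¹)
      (F' := fun (t : ℝ) (ω : sphere (0 : E3) 1) => fderiv ℝ (fun z : E3 => ‖z - ξ‖⁻¹) (t • (ω : E3)) ω)
      (x₀ := x) (s := Set.Ioo 0 r) (bound := fun _ => (1 - r)⁻¹ ^ 2) (isOpen_Ioo.mem_nhds hx)
      ?_ ?_ ?_ ?_ (integrable_const _) ?_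
    · rw [ker_flux ξ hξ x hx.1 hx1] at this
      exact this.2
    · filter_upwards [isOpen_Ioo.mem_nhds hx] with t ht
      exact (cont_val _ (ker_cd_ball ξ hξ) t ht.1.le (ht.2.trans hr1)).aestronglyMeasurable
    · exact cont_int _ (cont_val _ (ker_cd_ball ξ hξ) x hx.1.le hx1)
    · exact (cont_der _ (ker_cd_ball ξ hξ) x hx.1.le hx1).aestronglyMeasurable
    · refine Filter.Eventually.of_forall fun ω t ht => ?_
      have hlow := ker_lower ξ hξ t ht.1.le ω
      have hN : 0 < ‖t • (ω : E3) - ξ‖ := by linarith [ht.2]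
      rw [(ker_deriv ξ _ (ker_ne ξ hξ _ (smul_mem_ball t ht.1.le (ht.2.trans hr1) ω))).fderiv]
      simp only [smul_apply, innerSL_apply_apply, smul_eq_mul, norm_mul, norm_neg,
        norm_pow, norm_inv, norm_norm]
      have h1 : ‖⟪t • (ω : E3) - ξ, (ω : E3)⟫‖ ≤ ‖t • (ω : E3) - ξ‖ := by
        simpa using norm_inner_le_norm (𝕜 := ℝ) (t • (ω : E3) - ξ) (ω : E3)
      calc ‖t • (ω : E3) - ξ‖⁻¹ ^ 3 * ‖⟪t • (ω : E3) - ξ, (ω : E3)⟫‖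
          ≤ ‖t • (ω : E3) - ξ‖⁻¹ ^ 3 * ‖t • (ω : E3) - ξ‖ := by gcongr
        _ = ‖t • (ω : E3) - ξ‖⁻¹ ^ 2 := by field_simp
        _ ≤ _ := by
          have : 0 < 1 - r := by linarith
          gcongr
          linarith [ht.2]
    · refine Filter.Eventually.of_forall fun ω t ht => ?_
      have h1 := ker_deriv ξ _ (ker_ne ξ hξ _ (smul_mem_ball t ht.1.le (ht.2.trans hr1) ω))
      have h2 : HasDerivAt (fun t : ℝ => t • (ω : E3)) (ω : E3) t := by
        simpa using (hasDerivAt_id t).smul_const (ω : E3)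
      rw [h1.fderiv]
      exact h1.comp_hasDerivAt t h2
  obtain ⟨x, hx, h⟩ := exists_hasDerivAt_eq_slope M (fun _ => 0) hr0
    (hMc.mono fun y hy => ⟨by linarith [hy.1], by linarith [hy.2]⟩) hMd
  have : M r - M 0 = 0 := by
    have h' := h.symm
    rw [div_eq_zero_iff] at h'
    rcases h' with h' | h'
    · exact h'
    · linarith
  show M r = _
  linarith

lemma ker_integrable (ξ : E3) (hξ : ‖ξ‖ = 1) :
    Integrable (fun ω : sphere (0 : E3) 1 => ‖(ω : E3) - ξ‖⁻¹) sig := by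
  have hmeas : Measurable (fun ω : sphere (0 : E3) 1 => ‖(ω : E3) - ξ‖⁻¹) := by fun_prop
  refine ⟨hmeas.aestronglyMeasurable, ?_⟩
  set r : ℕ → ℝ := fun n => 1 - 1 / ((n : ℝ) + 2) with hr
  have hr0 : ∀ n, 0 < r n := by
    intro n
    have : 1 / ((n : ℝ) + 2) < 1 := by rw [div_lt_one (by positivity)]; linarith [(Nat.cast_nonneg n : (0:ℝ) ≤ n)]
    simp only [hr]; linarith
  have hr1 : ∀ n, r n < 1 := by
    intro n
    have : 0 < 1 / ((n : ℝ) + 2) := by positivity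
    simp only [hr]; linarith
  have hlim : Filter.Tendsto r Filter.atTop (nhds 1) := by
    have h1 : Filter.Tendsto (fun n : ℕ => (n : ℝ) + 2) Filter.atTop Filter.atTop :=
      Filter.tendsto_atTop_add_const_right _ _ tendsto_natCast_atTop_atTop
    have h2 := (tendsto_const_nhds (x := (1 : ℝ))).sub (h1.inv_tendsto_atTop)
    simpa [hr] using h2
  have hF := lintegral_liminf_le (μ := sig) (u := Filter.atTop)
    (f := fun n (ω : sphere (0 : E3) 1) => ENNReal.ofReal (‖r n • (ω : E3) - ξ‖⁻¹)) (fun n => by fun_prop)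
  have hval : ∀ n, ∫⁻ ω : sphere (0 : E3) 1, ENNReal.ofReal (‖r n • (ω : E3) - ξ‖⁻¹) ∂sig
      = ENNReal.ofReal (4 * Real.pi) := by
    intro n
    rw [← ker_mean ξ hξ (r n) (hr0 n) (hr1 n), ofReal_integral_eq_lintegral_ofReal]
    · exact cont_int _ (cont_val _ (ker_cd_ball ξ hξ) (r n) (hr0 n).le (hr1 n))
    · exact Filter.Eventually.of_forall fun ω => by positivity
  simp only [hval, Filter.liminf_const] at hF
  rw [hasFiniteIntegral_iff_ofReal (Filter.Eventually.of_forall fun ω => by positivity)]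
  refine lt_of_le_of_lt (le_trans (lintegral_mono fun ω => ?_) hF) ENNReal.ofReal_lt_top
  by_cases hω : (ω : E3) = ξ
  · simp [hω]
  · have hne : ‖(ω : E3) - ξ‖ ≠ 0 := norm_ne_zero_iff.2 (sub_ne_zero.2 hω)
    have h1 : Filter.Tendsto (fun n => ENNReal.ofReal (‖r n • (ω : E3) - ξ‖⁻¹)) Filter.atTop
        (nhds (ENNReal.ofReal (‖(ω : E3) - ξ‖⁻¹))) := by
      refine ENNReal.tendsto_ofReal (Filter.Tendsto.inv₀ ?_ hne)
      have := ((hlim.smul_const (ω : E3)).sub_const ξ).norm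
      simpa using this
    exact h1.liminf_eq.ge

lemma ker_null (ξ : E3) (hξ : ‖ξ‖ = 1) : ∀ᵐ ω : sphere (0 : E3) 1 ∂sig, (ω : E3) ≠ ξ := by
  have hset : {ω : sphere (0 : E3) 1 | ¬ (ω : E3) ≠ ξ} ⊆ {ω | (ω : E3) = ξ} := by
    intro ω h; simpa using h
  rw [ae_iff]
  refine measure_mono_null hset ?_
  rw [← measureReal_eq_zero_iff]
  set m := sig.real {ω : sphere (0 : E3) 1 | (ω : E3) = ξ} with hm
  have hm0 : 0 ≤ m := measureReal_nonneg
  by_contra hne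
  have hmpos : 0 < m := lt_of_le_of_ne hm0 (Ne.symm hne)
  have hest : ∀ r : ℝ, 0 < r → r < 1 → m ≤ 4 * Real.pi * (1 - r) := by
    intro r hr0 hr1
    have h1r : 0 < 1 - r := by linarith
    have h := mul_meas_ge_le_integral_of_nonneg (μ := sig)
      (f := fun ω : sphere (0 : E3) 1 => ‖r • (ω : E3) - ξ‖⁻¹)
      (Filter.Eventually.of_forall fun ω => by positivity)
      (cont_int _ (cont_val _ (ker_cd_ball ξ hξ) r hr0.le hr1)) (1 - r)⁻¹
    rw [ker_mean ξ hξ r hr0 hr1] at h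
    have h2 : m ≤ sig.real {ω : sphere (0 : E3) 1 | (1 - r)⁻¹ ≤ ‖r • (ω : E3) - ξ‖⁻¹} := by
      refine measureReal_mono ?_
      intro ω hω
      have hω' : (ω : E3) = ξ := hω
      have : r • ξ - ξ = (r - 1) • ξ := by rw [sub_smul, one_smul]
      simp only [Set.mem_ofPred_eq]
      rw [hω', this, norm_smul, hξ, mul_one, Real.norm_eq_abs, abs_sub_comm, abs_of_pos h1r]
    have h3 : (1 - r)⁻¹ * m ≤ 4 * Real.pi := le_trans (by gcongr) h
    rwa [inv_mul_le_iff₀ h1r, mul_comm] at h3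
  have hpi := Real.pi_pos
  set e := min (1 / 2) (m / (8 * Real.pi)) with he
  have he0 : 0 < e := lt_min (by norm_num) (by positivity)
  have he1 : e ≤ 1 / 2 := min_le_left _ _
  have he2 : e ≤ m / (8 * Real.pi) := min_le_right _ _
  have := hest (1 - e) (by linarith) (by linarith)
  have h4 : 4 * Real.pi * e ≤ 4 * Real.pi * (m / (8 * Real.pi)) := by gcongr
  have h5 : 4 * Real.pi * (m / (8 * Real.pi)) = m / 2 := by field_simp; norm_num
  have h6 : 1 - (1 - e) = e := by ring
  rw [h6] at this
  linarith

lemma unit_thm (u : E3 → ℝ) (V : Set E3) (hVo : IsOpen V) (hV : closedBall (0 : E3) 1 ⊆ V)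
    (hu : ContDiffOn ℝ 2 u V) (lu : ∀ y ∈ V, lap u y = 0) (ξ : E3) (hξ : ‖ξ‖ = 1) :
    Integrable (fun ω : sphere (0 : E3) 1 => ‖(ω : E3) - ξ‖⁻¹ * (2 * fderiv ℝ u ω ω + u ω)) sig ∧
    ∫ ω : sphere (0 : E3) 1, ‖(ω : E3) - ξ‖⁻¹ * (2 * fderiv ℝ u ω ω + u ω) ∂sig
      = 4 * Real.pi * u ξ := by
  have hbV : ball (0 : E3) 1 ⊆ V := ball_subset_closedBall.trans hV
  have hub : ContDiffOn ℝ 2 u (ball 0 1) := hu.mono hbV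
  have hfc : ContinuousOn (fderiv ℝ u) V := hu.continuousOn_fderiv_of_isOpen hVo (by norm_num)
  have hmem : ∀ ω : sphere (0 : E3) 1, (ω : E3) ∈ closedBall (0 : E3) 1 := fun ω =>
    sphere_subset_closedBall ω.2
  obtain ⟨C, hC⟩ := (isCompact_closedBall (0 : E3) 1).exists_bound_of_continuousOn
    (hu.continuousOn.mono hV)
  obtain ⟨L, hL⟩ := (isCompact_closedBall (0 : E3) 1).exists_bound_of_continuousOn (hfc.mono hV)
  have hξm : ξ ∈ closedBall (0 : E3) 1 := by simp [hξ]
  have hLip : ∀ y ∈ closedBall (0 : E3) 1, |u y - u ξ| ≤ L * ‖y - ξ‖ := by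
    intro y hy
    exact (convex_closedBall (0 : E3) 1).norm_image_sub_le_of_norm_fderiv_le (𝕜 := ℝ)
      (fun x hx => (hu.contDiffAt (hVo.mem_nhds (hV hx))).differentiableAt two_ne_zero) hL hξm hy
  have hL0 : 0 ≤ L := (norm_nonneg _).trans (hL ξ hξm)
  have hC0 : 0 ≤ C := (norm_nonneg _).trans (hC ξ hξm)
  have hker := ker_integrable ξ hξ
  set J : ℝ → sphere (0 : E3) 1 → ℝ := fun r ω =>
    ‖r • (ω : E3) - ξ‖⁻¹ * (2 * r * fderiv ℝ u (r • (ω : E3)) ω + u (r • (ω : E3)))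
      - (1 - r ^ 2) * ‖r • (ω : E3) - ξ‖⁻¹ ^ 3 * (u (r • (ω : E3)) - u ξ) with hJ
  have hJ1 : ∀ ω : sphere (0 : E3) 1,
      J 1 ω = ‖(ω : E3) - ξ‖⁻¹ * (2 * fderiv ℝ u ω ω + u ω) := by
    intro ω; simp [hJ]
  have hcv : Continuous (fun ω : sphere (0 : E3) 1 => u ω) :=
    hu.continuousOn.comp_continuous continuous_subtype_val (fun ω => hV (hmem ω))
  have hcd : Continuous (fun ω : sphere (0 : E3) 1 => fderiv ℝ u ω ω) :=
    (hfc.comp_continuous continuous_subtype_val (fun ω => hV (hmem ω))).clm_apply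
      continuous_subtype_val
  have hder : ∀ y ∈ closedBall (0 : E3) 1, ∀ ω : sphere (0 : E3) 1, |fderiv ℝ u y ω| ≤ L := by
    intro y hy ω
    have := (fderiv ℝ u y).le_opNorm ω
    simp at this
    exact this.trans (hL y hy)
  have hInt1 : Integrable (fun ω : sphere (0 : E3) 1 =>
      ‖(ω : E3) - ξ‖⁻¹ * (2 * fderiv ℝ u ω ω + u ω)) sig := by
    refine hker.mul_bdd (c := 2 * L + C)
      ((continuous_const.mul hcd).add hcv).aestronglyMeasurable ?_
    refine Filter.Eventually.of_forall fun ω => ?_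
    have h1 := hder ω (hmem ω) ω
    have h2 : |u ω| ≤ C := hC ω (hmem ω)
    rw [Real.norm_eq_abs]
    refine (abs_add_le _ _).trans ?_
    rw [abs_mul, abs_two]
    linarith
  refine ⟨hInt1, ?_⟩
  -- the decomposition of `J`
  have hdec : ∀ r, 0 < r → r < 1 → ∀ ω, J r ω =
      (-(2 * r)) * (u (r • (ω : E3)) * fderiv ℝ (fun z : E3 => ‖z - ξ‖⁻¹) (r • (ω : E3)) ω
        - ‖r • (ω : E3) - ξ‖⁻¹ * fderiv ℝ u (r • (ω : E3)) ω)
      + u ξ * (2 * r * fderiv ℝ (fun z : E3 => ‖z - ξ‖⁻¹) (r • (ω : E3)) ω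
        + ‖r • (ω : E3) - ξ‖⁻¹) := by
    intro r hr0 hr1 ω
    have := ker_radial ξ hξ r hr0 hr1 ω
    simp only [hJ]
    linear_combination (u (r • (ω : E3)) - u ξ) * this
  have hK := ker_cd_ball ξ hξ
  have hJc : ∀ r, 0 < r → r < 1 → Continuous (J r) := by
    intro r hr0 hr1
    have h1 := cont_val u hub r hr0.le hr1
    have h2 := cont_der u hub r hr0.le hr1
    have h3 := cont_val _ hK r hr0.le hr1
    exact (h3.mul ((continuous_const.mul h2).add h1)).sub
      ((continuous_const.mul (h3.pow 3)).mul (h1.sub continuous_const))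
  have hJint : ∀ r, 0 < r → r < 1 → ∫ ω, J r ω ∂sig = 4 * Real.pi * u ξ := by
    intro r hr0 hr1
    have h1 := cont_val u hub r hr0.le hr1
    have h2 := cont_der u hub r hr0.le hr1
    have h3 := cont_val _ hK r hr0.le hr1
    have h4 := cont_der _ hK r hr0.le hr1
    have hg := green u _ hub hK (fun y hy => lu y (hbV hy))
      (fun y hy => ker_lap ξ y (ker_ne ξ hξ y hy)) r hr0 hr1
    simp only [hdec r hr0 hr1]
    rw [integral_add, integral_const_mul, hg, integral_const_mul, integral_add, integral_const_mul,
      ker_flux ξ hξ r hr0 hr1, ker_mean ξ hξ r hr0 hr1]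
    · ring
    · exact cont_int _ (continuous_const.mul h4)
    · exact cont_int _ h3
    · exact cont_int _ (continuous_const.mul ((h1.mul h4).sub (h3.mul h2)))
    · exact cont_int _ (continuous_const.mul ((continuous_const.mul h4).add h3))
  have hev : ∀ᶠ r in nhdsWithin (1 : ℝ) (Set.Iio 1), 0 < r ∧ r < 1 := by
    filter_upwards [self_mem_nhdsWithin, mem_nhdsWithin_of_mem_nhds (Ioi_mem_nhds one_pos)]
      with r h1 h2 using ⟨h2, h1⟩
  have hlim : Filter.Tendsto (fun r => ∫ ω, J r ω ∂sig) (nhdsWithin (1 : ℝ) (Set.Iio 1))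
      (nhds (∫ ω, J 1 ω ∂sig)) := by
    refine tendsto_integral_filter_of_dominated_convergence
      (fun ω : sphere (0 : E3) 1 => (4 * L + C) * (2 * ‖(ω : E3) - ξ‖⁻¹)) ?_ ?_
      ((hker.const_mul 2).const_mul _) ?_
    · filter_upwards [hev] with r hr using (hJc r hr.1 hr.2).aestronglyMeasurable
    · filter_upwards [hev] with r hr
      obtain ⟨hr0, hr1⟩ := hr
      filter_upwards [ker_null ξ hξ] with ω hω
      have hlow := ker_lower ξ hξ r hr0.le ω
      have hd0 : 0 < ‖(ω : E3) - ξ‖ := norm_pos_iff.2 (sub_ne_zero.2 hω)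
      have hyb : r • (ω : E3) ∈ closedBall (0 : E3) 1 :=
        ball_subset_closedBall (smul_mem_ball r hr0.le hr1 ω)
      have h1 := hder _ hyb ω
      have h2 : |u (r • (ω : E3))| ≤ C := hC _ hyb
      have h3 := hLip _ hyb
      have htri : ‖(ω : E3) - ξ‖ ≤ (1 - r) + ‖r • (ω : E3) - ξ‖ := by
        have e : (ω : E3) - ξ = (1 - r) • (ω : E3) + (r • (ω : E3) - ξ) := by
          rw [sub_smul, one_smul]; abel
        rw [e]
        refine (norm_add_le _ _).trans ?_
        rw [norm_smul, Real.norm_eq_abs, abs_of_pos (by linarith : 0 < 1 - r)]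
        simp
      simp only [hJ, Real.norm_eq_abs]
      set N := ‖r • (ω : E3) - ξ‖ with hN
      set d := ‖(ω : E3) - ξ‖ with hd
      have hN0 : 0 < N := by linarith
      have hNd : N⁻¹ ≤ 2 * d⁻¹ := by
        have : d ≤ 2 * N := by linarith
        rw [inv_eq_one_div, inv_eq_one_div, ← mul_div_assoc, div_le_div_iff₀ hN0 hd0]
        linarith
      have hA : |N⁻¹ * (2 * r * fderiv ℝ u (r • (ω : E3)) ω + u (r • (ω : E3)))|
          ≤ N⁻¹ * (2 * L + C) := by
        rw [abs_mul, abs_of_pos (inv_pos.2 hN0)]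
        gcongr
        refine (abs_add_le _ _).trans ?_
        rw [abs_mul, abs_of_pos (by linarith : 0 < 2 * r)]
        have : 2 * r * |fderiv ℝ u (r • (ω : E3)) ω| ≤ 2 * 1 * L := by gcongr
        linarith
      have hB : |(1 - r ^ 2) * N⁻¹ ^ 3 * (u (r • (ω : E3)) - u ξ)| ≤ N⁻¹ * (2 * L) := by
        have h5 : 0 ≤ 1 - r ^ 2 := by nlinarith
        have h6 : 1 - r ^ 2 ≤ 2 * N := by nlinarith
        rw [abs_mul, abs_of_nonneg (by positivity)]
        calc (1 - r ^ 2) * N⁻¹ ^ 3 * |u (r • (ω : E3)) - u ξ|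
            ≤ (2 * N) * N⁻¹ ^ 3 * (L * N) := by gcongr
          _ = N⁻¹ * (2 * L) := by field_simp
      refine (abs_sub _ _).trans ?_
      calc _ ≤ N⁻¹ * (2 * L + C) + N⁻¹ * (2 * L) := add_le_add hA hB
        _ = (4 * L + C) * N⁻¹ := by ring
        _ ≤ _ := by gcongr
    · filter_upwards [ker_null ξ hξ] with ω hω
      refine Filter.Tendsto.mono_left ?_ nhdsWithin_le_nhds
      have hd0 : ‖(1 : ℝ) • (ω : E3) - ξ‖ ≠ 0 := by
        rw [one_smul]; exact norm_ne_zero_iff.2 (sub_ne_zero.2 hω)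
      have hs : ContinuousAt (fun r : ℝ => r • (ω : E3)) 1 := by fun_prop
      have hV1 : V ∈ nhds ((1 : ℝ) • (ω : E3)) := by
        rw [one_smul]; exact hVo.mem_nhds (hV (hmem ω))
      have c1 : ContinuousAt (fun r : ℝ => u (r • (ω : E3))) 1 :=
        ContinuousAt.comp (f := fun r : ℝ => r • (ω : E3)) (hu.continuousOn.continuousAt hV1) hs
      have c2 : ContinuousAt (fun r : ℝ => fderiv ℝ u (r • (ω : E3)) ω) 1 :=
        (ContinuousAt.comp (f := fun r : ℝ => r • (ω : E3)) (hfc.continuousAt hV1) hs).clm_apply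
          continuousAt_const
      have c3 : ContinuousAt (fun r : ℝ => ‖r • (ω : E3) - ξ‖⁻¹) 1 :=
        ContinuousAt.inv₀ (by fun_prop) hd0
      have : ContinuousAt (fun r => J r ω) 1 := by
        have c4 : ContinuousAt (fun r : ℝ => 1 - r ^ 2) 1 := by fun_prop
        have c5 : ContinuousAt (fun r : ℝ => 2 * r) 1 := by fun_prop
        exact (c3.mul ((c5.mul c2).add c1)).sub ((c4.mul (c3.pow 3)).mul (c1.sub continuousAt_const))
      exact this
  have hconst : Filter.Tendsto (fun r => ∫ ω, J r ω ∂sig) (nhdsWithin (1 : ℝ) (Set.Iio 1))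
      (nhds (4 * Real.pi * u ξ)) := by
    refine tendsto_const_nhds.congr' ?_
    filter_upwards [hev] with r hr using (hJint r hr.1 hr.2).symm
  have := tendsto_nhds_unique hlim hconst
  simpa only [hJ1] using this

lemma gradG_zero : gradient G 0 = 0 := by
  have hG : (fun z : E3 => G (-z)) = G := by funext z; simp [G]
  have h0 : fderiv ℝ G (0 : E3) = 0 := by
    by_cases hd : DifferentiableAt ℝ G (0 : E3)
    · have h1 : HasFDerivAt G (fderiv ℝ G (0 : E3)) (-(0 : E3)) := by
        rw [neg_zero]; exact hd.hasFDerivAt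
      have h2 : HasFDerivAt (fun z : E3 => -z) (-(ContinuousLinearMap.id ℝ E3)) (0 : E3) :=
        (hasFDerivAt_id (0 : E3)).neg
      have h3 : HasFDerivAt (fun z : E3 => G (-z)) _ (0 : E3) := h1.comp (0 : E3) h2
      rw [hG] at h3
      have h4 := h3.unique hd.hasFDerivAt
      ext w
      have h5 := congrArg (fun L => L w) h4
      simp at h5
      simp
      linarith
    · exact fderiv_zero_of_not_differentiableAt hd
  simp [gradient, h0]

lemma gradG_inner (z w : E3) (hz : z ≠ 0) :
    ⟪gradient G z, w⟫ = -(⟪z, w⟫ * ‖z‖⁻¹ ^ 3) / (4 * Real.pi) := by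
  have hG : G = fun z : E3 => (4 * Real.pi)⁻¹ * ‖z - 0‖⁻¹ := by
    funext z; simp [G]; ring
  have h := ((ker_deriv 0 z hz).const_mul ((4 * Real.pi)⁻¹)).fderiv
  rw [← hG] at h
  rw [gradient, InnerProductSpace.toDual_symm_apply, h]
  simp
  ring

lemma lap_scale (c : E3) (R : ℝ) (φ : E3 → ℝ) (U : Set E3) (hU : IsOpen U)
    (hφ : ContDiffOn ℝ 2 φ U) (y : E3) (hy : c + R • y ∈ U) :
    lap (fun z => φ (c + R • z)) y = R ^ 2 * lap φ (c + R • y) := by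
  have hA : ∀ z : E3, HasFDerivAt (fun z : E3 => c + R • z) (R • ContinuousLinearMap.id ℝ E3) z := by
    intro z
    exact ((hasFDerivAt_id z).const_smul R).const_add c
  have hopen : IsOpen ((fun z : E3 => c + R • z) ⁻¹' U) := hU.preimage (by fun_prop)
  unfold lap
  rw [Finset.mul_sum]
  refine Finset.sum_congr rfl fun i _ => ?_
  set e : E3 := EuclideanSpace.single i 1
  have h1 : (fun z => fderiv ℝ (fun z => φ (c + R • z)) z e) =ᶠ[nhds y]
      fun z => R * fderiv ℝ φ (c + R • z) e := by
    filter_upwards [hopen.mem_nhds hy] with z hz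
    have hd : DifferentiableAt ℝ φ (c + R • z) :=
      (hφ.contDiffAt (hU.mem_nhds hz)).differentiableAt two_ne_zero
    have := (hd.hasFDerivAt.comp z (hA z)).fderiv
    have h2 := congrArg (fun L => L e) this
    refine h2.trans ?_
    simp
  rw [h1.fderiv_eq]
  have hp : DifferentiableAt ℝ (fun z => fderiv ℝ φ z e) (c + R • y) := by
    have : ContDiffOn ℝ 1 (fun y => fderiv ℝ φ y e) U :=
      (hφ.fderiv_of_isOpen hU (by norm_num)).clm_apply contDiffOn_const
    exact (this.contDiffAt (hU.mem_nhds hy)).differentiableAt one_ne_zero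
  have := ((hp.hasFDerivAt.comp y (hA y)).const_mul R).fderiv
  have h2 := congrArg (fun L => L e) this
  refine h2.trans ?_
  simp
  ring

/-- **Boundary trace of the representation formula with coefficient `c(x) = 1/2` on a
sphere**: if `φ` is harmonic on an open neighborhood of the closed ball `B(c, R)`,
then for every boundary point `x` (‖x − c‖ = R) the boundary-integral integrand is
integrable on `S²` and
`(1/2) φ(x) = ∫_{S²} [G(c + Rω − x) (∇φ(c + Rω) · ω) − φ(c + Rω) (∇G(c + Rω − x) · ω)] R² dσ(ω)`. -/
theorem stmt_6 (c : EuclideanSpace ℝ (Fin 3)) (R : ℝ) (hR : 0 < R)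
    (φ : EuclideanSpace ℝ (Fin 3) → ℝ)
    (U : Set (EuclideanSpace ℝ (Fin 3))) (hU : IsOpen U)
    (hBU : closedBall c R ⊆ U)
    (hφ : ContDiffOn ℝ 2 φ U)
    (hharm : ∀ y ∈ U, lap φ y = 0) :
    ∀ x : EuclideanSpace ℝ (Fin 3), ‖x - c‖ = R →
      Integrable (fun ω : sphere (0 : EuclideanSpace ℝ (Fin 3)) 1 =>
        (G (c + R • (ω : EuclideanSpace ℝ (Fin 3)) - x) *
            ⟪gradient φ (c + R • (ω : EuclideanSpace ℝ (Fin 3))),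
              (ω : EuclideanSpace ℝ (Fin 3))⟫
          - φ (c + R • (ω : EuclideanSpace ℝ (Fin 3))) *
            ⟪gradient G (c + R • (ω : EuclideanSpace ℝ (Fin 3)) - x),
              (ω : EuclideanSpace ℝ (Fin 3))⟫) * R ^ 2)
        ((volume : Measure (EuclideanSpace ℝ (Fin 3))).toSphere) ∧
      (1 / 2 : ℝ) * φ x = ∫ ω : sphere (0 : EuclideanSpace ℝ (Fin 3)) 1,
        (G (c + R • (ω : EuclideanSpace ℝ (Fin 3)) - x) *
            ⟪gradient φ (c + R • (ω : EuclideanSpace ℝ (Fin 3))),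
              (ω : EuclideanSpace ℝ (Fin 3))⟫
          - φ (c + R • (ω : EuclideanSpace ℝ (Fin 3))) *
            ⟪gradient G (c + R • (ω : EuclideanSpace ℝ (Fin 3)) - x),
              (ω : EuclideanSpace ℝ (Fin 3))⟫) * R ^ 2
        ∂((volume : Measure (EuclideanSpace ℝ (Fin 3))).toSphere) := by

  intro x hx
  set u : E3 → ℝ := fun z => φ (c + R • z) with hu
  set V : Set E3 := (fun z : E3 => c + R • z) ⁻¹' U with hVdef
  set ξ : E3 := R⁻¹ • (x - c) with hξdef
  have hξ : ‖ξ‖ = 1 := by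
    rw [hξdef, norm_smul, hx, norm_inv, Real.norm_eq_abs, abs_of_pos hR]
    field_simp
  have hxξ : x = c + R • ξ := by
    rw [hξdef, smul_smul, mul_inv_cancel₀ hR.ne', one_smul]; abel
  have hVo : IsOpen V := hU.preimage (by fun_prop)
  have hV : closedBall (0 : E3) 1 ⊆ V := by
    intro z hz
    apply hBU
    have : ‖z‖ ≤ 1 := by simpa using hz
    simp [norm_smul, abs_of_pos hR]
    nlinarith
  have hucd : ContDiffOn ℝ 2 u V := by
    refine hφ.comp (t := U) ?_ (fun z hz => hz)
    exact (contDiff_const.add (contDiff_id.const_smul R)).contDiffOn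
  have hlu : ∀ y ∈ V, lap u y = 0 := by
    intro y hy
    rw [hu, lap_scale c R φ U hU hφ y hy, hharm _ hy, mul_zero]
  obtain ⟨hI, hE⟩ := unit_thm u V hVo hV hucd hlu ξ hξ
  have hpi := Real.pi_pos
  have key : ∀ ω : sphere (0 : E3) 1,
      (G (c + R • (ω : E3) - x) * ⟪gradient φ (c + R • (ω : E3)), (ω : E3)⟫
          - φ (c + R • (ω : E3)) * ⟪gradient G (c + R • (ω : E3) - x), (ω : E3)⟫) * R ^ 2
      = (8 * Real.pi)⁻¹ * (‖(ω : E3) - ξ‖⁻¹ * (2 * fderiv ℝ u ω ω + u ω)) := by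
    intro ω
    have hz : c + R • (ω : E3) - x = R • ((ω : E3) - ξ) := by
      rw [hxξ, smul_sub]; abel
    have hωV : (ω : E3) ∈ V := hV (sphere_subset_closedBall ω.2)
    have hgrad : ⟪gradient φ (c + R • (ω : E3)), (ω : E3)⟫ = R⁻¹ * fderiv ℝ u ω ω := by
      rw [gradient, InnerProductSpace.toDual_symm_apply]
      have hd : DifferentiableAt ℝ φ (c + R • (ω : E3)) :=
        (hφ.contDiffAt (hU.mem_nhds hωV)).differentiableAt two_ne_zero
      have hA : HasFDerivAt (fun z : E3 => c + R • z) (R • ContinuousLinearMap.id ℝ E3) (ω : E3) :=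
        ((hasFDerivAt_id (ω : E3)).const_smul R).const_add c
      have := (hd.hasFDerivAt.comp (ω : E3) hA).fderiv
      have h2 := congrArg (fun L => L (ω : E3)) this
      have h3 : fderiv ℝ u ω ω = R * fderiv ℝ φ (c + R • (ω : E3)) ω := by
        refine h2.trans ?_
        simp
      rw [h3]; field_simp
    rw [hz, hgrad]
    by_cases hω : (ω : E3) = ξ
    · simp [hω, gradG_zero, G]
    · have hne : (ω : E3) - ξ ≠ 0 := sub_ne_zero.2 hω
      have hd0 : 0 < ‖(ω : E3) - ξ‖ := norm_pos_iff.2 hne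
      have hip : ⟪(ω : E3) - ξ, (ω : E3)⟫ = ‖(ω : E3) - ξ‖ ^ 2 / 2 := by
        have hω1 : ‖(ω : E3)‖ = 1 := by simp
        rw [norm_sub_sq_real, hω1, hξ, inner_sub_left, real_inner_self_eq_norm_sq, hω1,
          real_inner_comm]
        ring
      rw [gradG_inner _ _ (smul_ne_zero hR.ne' hne), real_inner_smul_left, hip, G, norm_smul,
        Real.norm_eq_abs, abs_of_pos hR]
      have : φ (c + R • (ω : E3)) = u ω := rfl
      rw [this]
      field_simp
      ring
  simp only [key]
  refine ⟨hI.const_mul _, ?_⟩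
  rw [integral_const_mul, hE]
  have : u ξ = φ x := by rw [hu, hxξ]
  rw [this]
  field_simp
  ring
end
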